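/- There exist universal constants C₁ > 0 and C₂ ∈ (0,1) such that for all r, d ∈ ℕ with 1 ≤ d ≤ r and every α : F₃^r → F₃: 1 − 2|α|/3^d ≤ ρ_{r,d}(α) ≤ max{1 − C₁·Δ(α, P_{r,2r−2d−1})/3^d, C₂}, where ρ_{r,d}(α) := E[ω^{a·⟨α, Π_{i=1}^d (ℓ_i − 1)(ℓ_i − 2)⟩}], the expectation being over v₁,…,v_d uniformly random linearly independent vectors in F₃^r, independent uniform c₁,…,c_d ∈ F₃, and independent uniform a ∈ F₃, with ℓ_i : F₃^r → F₃ given by ℓ_i(x) := ⟨v_i, x⟩ + c_i and the product Π_{i=1}^d (ℓ_i − 1)(ℓ_i − 2) taken pointwise. -/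

import Mathlib

open scoped BigOperators

abbrev F3 := ZMod 3
abbrev Pt (r : ℕ) := Fin r → F3
abbrev Fn (r : ℕ) := Pt r → F3

/-- The set of functions `F₃^r → F₃` computed by polynomials of total degree at most `d`
with individual degrees at most `2`. -/
def PolySet (r d : ℕ) : Set (Fn r) :=
  {g | ∃ P : MvPolynomial (Fin r) F3,
        P.totalDegree ≤ d ∧ (∀ i, P.degreeOf i ≤ 2) ∧
        ∀ x, g x = MvPolynomial.eval x P}

noncomputable def polyFinset (r d : ℕ) : Finset (Fn r) :=
  (Set.toFinite (PolySet r d)).toFinset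

/-- Support size `|β|`. -/
def supp {r : ℕ} (β : Fn r) : ℕ := (Finset.univ.filter fun x => β x ≠ 0).card

/-- Dot product `⟨β, f⟩ = Σ_x β(x) f(x)` in `F₃`. -/
def dotF {r : ℕ} (β f : Fn r) : F3 := ∑ x, β x * f x

noncomputable def ω : ℂ := Complex.exp (2 * (Real.pi : ℂ) * Complex.I / 3)

/-- The character `χ_β(f) = ω^{⟨β,f⟩}`. -/
noncomputable def chi {r : ℕ} (β f : Fn r) : ℂ := ω ^ (dotF β f).val

/-- The dual `S^⊥` of a set of functions. -/
def dualSet (r : ℕ) (S : Set (Fn r)) : Set (Fn r) := {g | ∀ h ∈ S, dotF g h = 0}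

/-- `Λ` contains exactly one representative, of minimal support size, from each coset
of `𝔉_r` modulo `P_{r,d}^⊥`. -/
def IsMinRepSet (r d : ℕ) (Λ : Finset (Fn r)) : Prop :=
  (∀ β : Fn r, ∃! β', β' ∈ Λ ∧ β - β' ∈ dualSet r (PolySet r d)) ∧
  (∀ β' ∈ Λ, ∀ γ : Fn r, β' - γ ∈ dualSet r (PolySet r d) → supp β' ≤ supp γ)

/-- The noise `a·(p² + 1)` (pointwise). -/
def shift {r : ℕ} (p : Fn r) (a : F3) : Fn r := fun x => a * (p x ^ 2 + 1)

/-- Fourier coefficient `Â(β)` of a function on `P_{r,d}`. -/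
noncomputable def fourierP (r d : ℕ) (A : Fn r → ℂ) (β : Fn r) : ℂ :=
  (∑ g ∈ polyFinset r d, A g * (starRingEnd ℂ) (chi β g)) / ((polyFinset r d).card : ℂ)

/-- Expectation `E_{f ∈ P_{r,d}}[A(f)]`. -/
noncomputable def expP (r d : ℕ) (A : Fn r → ℝ) : ℝ :=
  (∑ f ∈ polyFinset r d, A f) / ((polyFinset r d).card : ℝ)

/-- Degree-`k` influence `Inf_x^{≤k}(A)` with respect to a set `Λ` of minimal-support
coset representatives. -/
noncomputable def infP (r d k : ℕ) (Λ : Finset (Fn r)) (A : Fn r → ℝ) (x : Pt r) : ℝ :=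
  ∑ β ∈ Λ.filter (fun β => β x ≠ 0 ∧ supp β ≤ k),
    ‖fourierP r d (fun g => (A g : ℂ)) β‖ ^ 2

open scoped Classical

/-- Hamming distance between two functions `F₃^r → F₃`. -/
def hammingD {r : ℕ} (f g : Fn r) : ℕ := (Finset.univ.filter fun x => f x ≠ g x).card

/-- Hamming distance from `α` to a set `S` of functions. -/
noncomputable def distToSet {r : ℕ} (α : Fn r) (S : Set (Fn r)) : ℕ :=
  sInf ((fun g => hammingD α g) '' S)

/-- Tuples of `d` linearly independent vectors in `F₃^r`. -/
noncomputable def LIset (r d : ℕ) : Finset (Fin d → Pt r) :=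
  Finset.univ.filter fun v : Fin d → Pt r => LinearIndependent F3 v

/-- The affine form `ℓ_i(x) = ⟨v_i, x⟩ + c_i`, times its shifts, multiplied out:
the function `x ↦ Π_i (ℓ_i(x) − 1)(ℓ_i(x) − 2)`. -/
def ellProd {r d : ℕ} (v : Fin d → Pt r) (c : Fin d → F3) : Fn r :=
  fun x => ∏ i, ((∑ j, v i j * x j) + c i - 1) * ((∑ j, v i j * x j) + c i - 2)

/-- The eigenvalue `ρ_{r,d}(α) = E_{v,c,a}[ω^{a·⟨α, Π_i (ℓ_i−1)(ℓ_i−2)⟩}]` (a real number,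
taken as real part). -/
noncomputable def rho (r d : ℕ) (α : Fn r) : ℝ :=
  ((∑ v ∈ LIset r d, ∑ c : Fin d → F3, ∑ a : F3,
      ω ^ (a * dotF α (ellProd v c)).val) /
    (((LIset r d).card : ℂ) * 3 ^ d * 3)).re

/-!
Since `(t - 1) (t - 2) = -(1 - t ^ 2)`, the product `Πᵢ (ℓᵢ - 1) (ℓᵢ - 2)` is, up to sign, the
indicator of the flat `ℓ₁ = ⋯ = ℓ_d = 0`. Averaging over `a` shows that `1 - ρ(α)` is the
proportion of flats of codimension `d` which detect `α`, that is, on which `α` has nonzero sum. A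
flat that detects `α` meets its support, and a point lies on a proportion `3 ^ (-d)` of the flats,
which is the lower bound.

For the upper bound, the functions `g` orthogonal to the polynomials of degree `2 d` are
polynomials of degree less than `2 r - 2 d`, and no flat detects them. If `α` is at distance
`s * 3 ^ d ≤ 3 ^ d / 2` from such a `g`, the second moment of the number of disagreements on a
random flat gives detection with probability at least `s - s ^ 2 ≥ s / 2`. It remains to find a
constant detection rate when `α` is far from all `g`, by induction on `d`: a random flat of
codimension `d + 1` is a random flat of codimension `d` in a random hyperplane. Either the
restrictions of `α` to almost all hyperplanes are far from the dual code, or a proportion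
`η ≈ (2 / 3) ^ d` of the hyperplanes `u` carry close codewords `g_u`.

In the second case any two `g_u` agree on the intersection of their hyperplanes, by the minimum
distance of the code, so they glue to a single function `P` with `P (1 - u ^ 2) = g_u`. By
polarization `P (u - v) (u + v)` lies in the dual of the polynomials of degree `2 d` for all such
`u`, `v`, so many forms `w` have many multipliers `v` carrying `P w` into that dual. Projecting
along these multipliers moves `P w` into the dual of degree one higher by changing few values, and
the corrected products glue to a product with a codeword. Hence `P`, and with it `α`, is close to
a codeword. The error terms sum to a constant loss over `d`; for small `d`, the cubic
`u ↦ u.linear y * ⟨α (1 - u ^ 2), φ⟩` shows that on a proportion at least `1 / 8` of the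
hyperplanes a function outside the dual code restricts to one outside the dual code.
-/

namespace FlatTest

universe u

section Degree

variable {K V V' : Type*} [CommRing K] [AddCommGroup V] [Module K V] [AddCommGroup V'] [Module K V']

variable (K V) in
/-- The functions on `V` of degree at most `e`, encoded as the span of the products of `e` affine
forms. -/
def polyDegLE (e : ℕ) : Submodule K (V → K) :=
  Submodule.span K (Set.range fun u : V →ᵃ[K] K => (u : V → K)) ^ e

lemma polyDegLE_add (a b : ℕ) : polyDegLE K V (a + b) = polyDegLE K V a * polyDegLE K V b :=
  pow_add _ a b

lemma affineMap_mem_polyDegLE (u : V →ᵃ[K] K) : ⇑u ∈ polyDegLE K V 1 := by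
  rw [polyDegLE, pow_one]
  exact Submodule.subset_span ⟨u, rfl⟩

lemma mul_mem_polyDegLE {a b : ℕ} {f g : V → K} (hf : f ∈ polyDegLE K V a)
    (hg : g ∈ polyDegLE K V b) : f * g ∈ polyDegLE K V (a + b) := by
  rw [polyDegLE_add]
  exact Submodule.mul_mem_mul hf hg

lemma polyDegLE_mono : Monotone (polyDegLE K V) := by
  refine fun a b hab => pow_le_pow_right' (Submodule.one_le.mpr ?_) hab
  exact Submodule.subset_span ⟨AffineMap.const K V 1, rfl⟩

lemma one_mem_polyDegLE (e : ℕ) : (1 : V → K) ∈ polyDegLE K V e := by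
  refine polyDegLE_mono (Nat.zero_le e) ?_
  rw [polyDegLE, pow_zero]
  exact Submodule.one_le.mp le_rfl

lemma pow_mem_polyDegLE {a : ℕ} {f : V → K} (hf : f ∈ polyDegLE K V a) (n : ℕ) :
    f ^ n ∈ polyDegLE K V (a * n) := by
  rw [polyDegLE, pow_mul]
  exact Submodule.pow_mem_pow _ hf n

lemma prod_mem_polyDegLE {ι : Type*} (s : Finset ι) {a : ι → ℕ} {f : ι → V → K}
    (hf : ∀ i ∈ s, f i ∈ polyDegLE K V (a i)) : ∏ i ∈ s, f i ∈ polyDegLE K V (∑ i ∈ s, a i) := by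
  classical
  induction s using Finset.induction_on with
  | empty => exact one_mem_polyDegLE _
  | insert i s hi ih =>
    rw [Finset.prod_insert hi, Finset.sum_insert hi]
    exact mul_mem_polyDegLE (hf i (Finset.mem_insert_self i s))
      (ih fun j hj => hf j (Finset.mem_insert_of_mem hj))

lemma polyDegLE_succ_induction {e : ℕ} {p : (V → K) → Prop}
    (mul : ∀ ψ ∈ polyDegLE K V e, ∀ u : V →ᵃ[K] K, p (ψ * u))
    (add : ∀ φ ψ, p φ → p ψ → p (φ + ψ)) {φ : V → K} (hφ : φ ∈ polyDegLE K V (e + 1)) : p φ := by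
  rw [polyDegLE, pow_succ] at hφ
  refine Submodule.mul_induction_on hφ (fun ψ hψ w hw => ?_) add
  induction hw using Submodule.span_induction generalizing ψ with
  | mem w hw =>
    obtain ⟨u, rfl⟩ := hw
    exact mul ψ hψ u
  | zero => simpa using mul ψ hψ 0
  | add w w' _ _ ih ih' =>
    rw [mul_add]
    exact add _ _ (ih ψ hψ) (ih' ψ hψ)
  | smul c w _ ih =>
    rw [mul_smul_comm, ← smul_mul_assoc]
    exact ih _ (Submodule.smul_mem _ c hψ)

lemma comp_mem_polyDegLE {e : ℕ} {φ : V → K} (hφ : φ ∈ polyDegLE K V e) (m : V' →ᵃ[K] V) :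
    φ ∘ m ∈ polyDegLE K V' e := by
  induction e generalizing φ with
  | zero =>
    rw [polyDegLE, pow_zero] at hφ ⊢
    obtain ⟨c, rfl⟩ := Submodule.mem_one.mp hφ
    exact Submodule.mem_one.mpr ⟨c, rfl⟩
  | succ e ih =>
    refine polyDegLE_succ_induction (p := fun φ => φ ∘ m ∈ polyDegLE K V' (e + 1))
      (fun ψ hψ u => ?_) (fun _ _ => Submodule.add_mem _) hφ
    exact mul_mem_polyDegLE (ih hψ) (affineMap_mem_polyDegLE (u.comp m))

end Degree

lemma mul_dotProduct_eq_dotProduct_mul {ι R : Type*} [Fintype ι] [NonUnitalSemiring R]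
    (f g h : ι → R) : (f * g) ⬝ᵥ h = f ⬝ᵥ (g * h) :=
  Finset.sum_congr rfl fun x _ => mul_assoc (f x) (g x) (h x)

section Dual

variable {K V : Type*} [CommRing K] [AddCommGroup V] [Module K V] [Fintype V]

variable (K V) in
/-- The functions on `V` orthogonal, for the dot product, to all functions of degree at most `e`. -/
def polyDual (e : ℕ) : Submodule K (V → K) where
  carrier := {f | ∀ φ ∈ polyDegLE K V e, f ⬝ᵥ φ = 0}
  add_mem' hf hg φ hφ := by rw [add_dotProduct, hf φ hφ, hg φ hφ, add_zero]
  zero_mem' _ _ := zero_dotProduct _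
  smul_mem' c f hf φ hφ := by rw [smul_dotProduct, hf φ hφ, smul_zero]

lemma polyDual_antitone : Antitone (polyDual K V) :=
  fun _ _ hab _ hf φ hφ => hf φ (polyDegLE_mono hab hφ)

lemma mul_mem_polyDual {a b : ℕ} {f φ : V → K} (hf : f ∈ polyDual K V (a + b))
    (hφ : φ ∈ polyDegLE K V b) : f * φ ∈ polyDual K V a := fun ψ hψ => by
  rw [mul_dotProduct_eq_dotProduct_mul, mul_comm φ ψ]
  exact hf _ (mul_mem_polyDegLE hψ hφ)

/-- The affine forms `u` for which `u * R` is orthogonal to the functions of degree at most `e`. -/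
def multipliers (e : ℕ) (R : V → K) : Submodule K (V →ᵃ[K] K) where
  carrier := {u | R * u ∈ polyDual K V e}
  add_mem' {u w} hu hw := by
    simpa only [Set.mem_ofPred_eq, AffineMap.coe_add, mul_add] using Submodule.add_mem _ hu hw
  zero_mem' := by
    simpa only [Set.mem_ofPred_eq, AffineMap.coe_zero, mul_zero] using Submodule.zero_mem _
  smul_mem' c u hu := by
    simpa only [Set.mem_ofPred_eq, AffineMap.coe_smul, mul_smul_comm] using
      Submodule.smul_mem _ c hu

lemma mem_multipliers {e : ℕ} {R : V → K} {u : V →ᵃ[K] K} :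
    u ∈ multipliers e R ↔ R * u ∈ polyDual K V e := Iff.rfl

lemma dotProduct_mul_comp_of_sub_comp_mem_multipliers {e : ℕ} {R ψ : V → K} {p : V →ᵃ[K] V}
    {u : V →ᵃ[K] K} (hu : u - u.comp p ∈ multipliers e R) (hψ : ψ ∈ polyDegLE K V e) :
    R ⬝ᵥ (ψ * u ∘ p) = R ⬝ᵥ (ψ * u) := by
  have h := hu ψ hψ
  rw [mul_dotProduct_eq_dotProduct_mul, mul_comm, AffineMap.coe_sub, AffineMap.coe_comp, mul_sub,
    dotProduct_sub, sub_eq_zero] at h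
  exact h.symm

-- Telescoping: `ψ u - (ψ ∘ p) (u ∘ p) = (ψ - ψ ∘ p) u + (ψ ∘ p) (u - u ∘ p)`.
lemma dotProduct_comp_of_sub_comp_mem_multipliers {e : ℕ} {R φ : V → K} {p : V →ᵃ[K] V}
    (hR : ∀ u : V →ᵃ[K] K, u - u.comp p ∈ multipliers e R) (hφ : φ ∈ polyDegLE K V (e + 1)) :
    R ⬝ᵥ (φ ∘ p) = R ⬝ᵥ φ := by
  induction e generalizing R φ with
  | zero =>
    refine polyDegLE_succ_induction (p := fun φ => R ⬝ᵥ (φ ∘ p) = R ⬝ᵥ φ) (fun ψ hψ u => ?_)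
      (fun φ ψ hφ hψ => by rw [Pi.add_comp, dotProduct_add, dotProduct_add, hφ, hψ]) hφ
    have hψp : ψ ∘ p = ψ := by
      rw [polyDegLE, pow_zero] at hψ
      obtain ⟨c, rfl⟩ := Submodule.mem_one.mp hψ
      rfl
    rw [Pi.mul_comp, hψp, dotProduct_mul_comp_of_sub_comp_mem_multipliers (hR u) hψ]
  | succ e ih =>
    refine polyDegLE_succ_induction (p := fun φ => R ⬝ᵥ (φ ∘ p) = R ⬝ᵥ φ) (fun ψ hψ u => ?_)
      (fun φ ψ hφ hψ => by rw [Pi.add_comp, dotProduct_add, dotProduct_add, hφ, hψ]) hφ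
    have hRu : ∀ w : V →ᵃ[K] K, w - w.comp p ∈ multipliers e (R * ⇑u) := fun w => by
      rw [mem_multipliers, mul_right_comm]
      exact mul_mem_polyDual (hR w) (affineMap_mem_polyDegLE u)
    rw [Pi.mul_comp, dotProduct_mul_comp_of_sub_comp_mem_multipliers (hR u)
      (comp_mem_polyDegLE hψ p), mul_comm, mul_comm ψ, ← mul_dotProduct_eq_dotProduct_mul,
      ← mul_dotProduct_eq_dotProduct_mul, ih hRu hψ]

end Dual

section Extension

noncomputable instance affineMapFintype {K V : Type*} [Ring K] [AddCommGroup V] [Module K V]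
    [Finite K] [Finite V] : Fintype (V →ᵃ[K] K) :=
  have : Finite (V →ᵃ[K] K) := DFunLike.finite _
  Fintype.ofFinite _

variable {K V : Type*} [Field K] [AddCommGroup V] [Module K V]

/-- The linear forms contained in a space of affine forms. -/
def linearForms (I : Submodule K (V →ᵃ[K] K)) : Submodule K (Module.Dual K V) :=
  I.comap ((AffineMap.toConstProdLinearMap K).symm.toLinearMap ∘ₗ LinearMap.inr K K _)

lemma mem_linearForms {I : Submodule K (V →ᵃ[K] K)} {v : Module.Dual K V} :
    v ∈ linearForms I ↔ v.toAffineMap ∈ I := by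
  have h : (AffineMap.toConstProdLinearMap K).symm (0, v) = v.toAffineMap := by
    ext x
    simp [AffineMap.toConstProdLinearMap]
  rw [linearForms, Submodule.mem_comap, ← h]
  rfl

lemma card_le_card_mul_card_linearForms [Fintype K] [Finite V]
    (I : Submodule K (V →ᵃ[K] K)) :
    Nat.card I ≤ Fintype.card K * Nat.card (linearForms I) := by
  have : Finite (Module.Dual K V) := DFunLike.finite _
  let c : I →ₗ[K] K :=
    LinearMap.fst K K _ ∘ₗ (AffineMap.toConstProdLinearMap K).toLinearMap ∘ₗ I.subtype
  have hker : Nat.card (LinearMap.ker c) ≤ Nat.card (linearForms I) := by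
    have hlin : ∀ u : LinearMap.ker c, u.1.1.linear.toAffineMap = u.1.1 := fun u => by
      have h0 : u.1.1 0 = 0 := u.2
      ext x
      simpa [h0] using (congrFun u.1.1.decomp x).symm
    refine Nat.card_le_card_of_injective
      (fun u => ⟨u.1.1.linear, mem_linearForms.2 (by rw [hlin u]; exact u.1.2)⟩) fun u w huw => ?_
    have h : u.1.1.linear = w.1.1.linear := congrArg Subtype.val huw
    exact Subtype.ext (Subtype.ext (by rw [← hlin u, ← hlin w, h]))
  rw [Submodule.card_eq_card_quotient_mul_card (LinearMap.ker c), ← Nat.card_eq_fintype_card,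
    mul_comm]
  exact Nat.mul_le_mul (Nat.card_le_card_of_injective _ c.quotKerEquivRange.injective |>.trans
    (Nat.card_le_card_of_injective _ Subtype.val_injective)) hker

variable [Fintype V]

-- `R'` is `R` minus its push-forward along a linear projection onto the common zeros of `L`.
lemma exists_mem_polyDual_succ_eq_off_dualCoannihilator {e : ℕ} {R : V → K}
    (L : Submodule K (Module.Dual K V)) (hL : ∀ v ∈ L, v.toAffineMap ∈ multipliers e R) :
    ∃ R' ∈ polyDual K V (e + 1), ∀ x ∉ L.dualCoannihilator, R' x = R x := by
  classical
  set Z := L.dualCoannihilator with hZ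
  obtain ⟨π, hπ⟩ := Z.subtype.exists_leftInverse_of_injective Z.ker_subtype
  set p : V →ₗ[K] V := Z.subtype ∘ₗ π
  have hpZ : ∀ z ∈ Z, p z = z := fun z hz => congrArg Subtype.val (LinearMap.congr_fun hπ ⟨z, hz⟩)
  have hmul : ∀ u : V →ᵃ[K] K, u - u.comp p.toAffineMap ∈ multipliers e R := fun u => by
    have hmem : u.linear - u.linear ∘ₗ p ∈ L := by
      have : FiniteDimensional K V := Module.Finite.of_finite
      rw [← Subspace.dualCoannihilator_dualAnnihilator_eq (W := L), ← hZ,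
        Submodule.mem_dualAnnihilator]
      intro z hz
      rw [LinearMap.sub_apply, LinearMap.comp_apply, hpZ z hz, sub_self]
    convert hL _ hmem using 1
    ext x
    have h₁ := u.map_vadd 0 x
    have h₂ := u.map_vadd 0 (p x)
    simp only [vadd_eq_add, add_zero] at h₁ h₂
    simp [h₁, h₂]
  refine ⟨fun x => R x - ∑ y with p y = x, R y, fun φ hφ => ?_, fun x hx => ?_⟩
  · have hpush : (fun x => ∑ y with p y = x, R y) ⬝ᵥ φ = R ⬝ᵥ (φ ∘ p) := by
      simp only [dotProduct, Finset.sum_mul, Finset.sum_filter, Function.comp_apply]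
      rw [Finset.sum_comm]
      simp
    have h := dotProduct_comp_of_sub_comp_mem_multipliers hmul hφ
    rw [LinearMap.coe_toAffineMap] at h
    change (R - fun x => ∑ y with p y = x, R y) ⬝ᵥ φ = 0
    rw [sub_dotProduct, hpush, h, sub_self]
  · dsimp only
    rw [Finset.filter_false_of_mem, Finset.sum_empty, sub_zero]
    rintro y - rfl
    exact hx (π y).2

variable [Fintype K]

lemma card_affineMap :
    Fintype.card (V →ᵃ[K] K) = Fintype.card K * Fintype.card V := by
  have e : (V →ᵃ[K] K) ≃ K × Module.Dual K V :=
    (AffineMap.toConstProdLinearMap K).toEquiv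
  rw [← Nat.card_eq_fintype_card, Nat.card_congr e, Nat.card_prod, Nat.card_eq_fintype_card,
    Module.natCard_eq_pow_finrank (K := K) (V := Module.Dual K V), Subspace.dual_finrank_eq,
    ← Module.natCard_eq_pow_finrank, Nat.card_eq_fintype_card]

lemma exists_mem_polyDual_succ_hammingDist_mul_le [DecidableEq K] (e : ℕ) (R : V → K) :
    ∃ R' ∈ polyDual K V (e + 1),
      hammingDist R R' * Nat.card (multipliers e R) ≤ Fintype.card (V →ᵃ[K] K) := by
  set L := linearForms (multipliers e R)
  obtain ⟨R', hR', heq⟩ :=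
    exists_mem_polyDual_succ_eq_off_dualCoannihilator L fun v hv => mem_linearForms.1 hv
  have hdist : hammingDist R R' ≤ Nat.card L.dualCoannihilator := by
    classical
    rw [Nat.card_eq_fintype_card, Fintype.card_subtype]
    refine Finset.card_le_card fun x hx => ?_
    simp only [Finset.mem_filter_univ] at hx ⊢
    exact not_imp_comm.1 (fun h => (heq x h).symm) hx
  have hcard : Nat.card L.dualCoannihilator * Nat.card L = Fintype.card V := by
    have : FiniteDimensional K V := Module.Finite.of_finite
    rw [Module.natCard_eq_pow_finrank (K := K) (V := L),
      Module.natCard_eq_pow_finrank (K := K) (V := L.dualCoannihilator), ← pow_add, add_comm,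
      Subspace.finrank_add_finrank_dualCoannihilator_eq, ← Module.natCard_eq_pow_finrank,
      Nat.card_eq_fintype_card]
  refine ⟨R', hR', ?_⟩
  calc hammingDist R R' * Nat.card (multipliers e R)
      ≤ Nat.card L.dualCoannihilator * (Fintype.card K * Nat.card L) :=
        Nat.mul_le_mul hdist (card_le_card_mul_card_linearForms _)
    _ = Fintype.card (V →ᵃ[K] K) := by rw [card_affineMap, ← hcard]; ring

lemma exists_mem_polyDual_succ_hammingDist_le [DecidableEq K] {e : ℕ} {R : V → K} {μ : ℝ}
    (hμ : 0 < μ) (hR : μ * Fintype.card (V →ᵃ[K] K) ≤ Nat.card (multipliers e R)) :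
    ∃ R' ∈ polyDual K V (e + 1), (hammingDist R R' : ℝ) ≤ 1 / μ := by
  obtain ⟨R', hR', hdist⟩ := exists_mem_polyDual_succ_hammingDist_mul_le e R
  have hN : (0 : ℝ) < Fintype.card (V →ᵃ[K] K) := Nat.cast_pos.2 Fintype.card_pos
  refine ⟨R', hR', ?_⟩
  rw [le_div_iff₀ hμ]
  refine le_of_mul_le_mul_right ?_ hN
  calc (hammingDist R R' : ℝ) * μ * Fintype.card (V →ᵃ[K] K)
      = hammingDist R R' * (μ * Fintype.card (V →ᵃ[K] K)) := mul_assoc _ _ _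
    _ ≤ hammingDist R R' * Nat.card (multipliers e R) := by gcongr
    _ ≤ 1 * Fintype.card (V →ᵃ[K] K) := by rw [one_mul]; exact_mod_cast hdist

end Extension

section Counting

lemma card_nsmul_sum_comp_of_surjective {G H M : Type*} [AddGroup G] [AddGroup H] [AddCommMonoid M]
    [Fintype G] [Fintype H] (f : G →+ H) (hf : Function.Surjective f) (F : H → M) :
    Fintype.card H • ∑ g, F (f g) = Fintype.card G • ∑ h, F h := by
  classical
  have hfib : ∀ h, Fintype.card H * (Finset.univ.filter fun g => f g = h).card =
      Fintype.card G := fun h => by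
    have hsum := Finset.card_eq_sum_card_fiberwise (f := f) (s := Finset.univ) (t := Finset.univ)
      (fun _ _ => Finset.mem_coe.2 (Finset.mem_univ _))
    rw [Finset.sum_congr rfl fun k _ =>
      AddMonoidHom.card_fiber_eq_of_mem_range f (hf k) (hf h), Finset.sum_const] at hsum
    simpa using hsum.symm
  rw [← Finset.sum_fiberwise Finset.univ f fun g => F (f g), Finset.smul_sum, Finset.smul_sum]
  refine Finset.sum_congr rfl fun h _ => ?_
  rw [Finset.sum_congr rfl fun g hg => by rw [(Finset.mem_filter.1 hg).2], Finset.sum_const,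
    smul_smul, hfib]

lemma card_mul_card_filter_of_surjective {G H : Type*} [AddGroup G] [AddGroup H] [Fintype G]
    [Fintype H] [DecidableEq H] (f : G →+ H) (hf : Function.Surjective f) (h : H) :
    Fintype.card H * (Finset.univ.filter fun g => f g = h).card = Fintype.card G := by
  have hsum := card_nsmul_sum_comp_of_surjective f hf fun k => if k = h then 1 else 0
  rwa [Finset.sum_ite_eq', if_pos (Finset.mem_univ h), smul_eq_mul, smul_eq_mul, mul_one,
    ← Finset.card_filter] at hsum

end Counting

section Mixing

variable {K V : Type*} [Field K] [Fintype K] [AddCommGroup V] [Module K V]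

/-- The indicator function of the hyperplane `u = 0`, as a polynomial function. -/
def hyperplaneInd (u : V →ᵃ[K] K) : V → K := 1 - ⇑u ^ (Fintype.card K - 1)

lemma hyperplaneInd_apply [DecidableEq K] (u : V →ᵃ[K] K) (x : V) :
    hyperplaneInd u x = if u x = 0 then 1 else 0 := by
  rw [hyperplaneInd, Pi.sub_apply, Pi.one_apply, Pi.pow_apply]
  split_ifs with h
  · rw [h, zero_pow (Nat.sub_pos_of_lt Fintype.one_lt_card).ne', sub_zero]
  · rw [FiniteField.pow_card_sub_one_eq_one _ h, sub_self]

lemma hyperplaneInd_mem_polyDegLE (u : V →ᵃ[K] K) :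
    hyperplaneInd u ∈ polyDegLE K V (Fintype.card K - 1) := by
  refine Submodule.sub_mem _ (one_mem_polyDegLE _) ?_
  simpa only [one_mul] using pow_mem_polyDegLE (affineMap_mem_polyDegLE u) (Fintype.card K - 1)

/-- The indicator of `0` in a finite field, shifted to have mean zero. -/
noncomputable def balancedInd [DecidableEq K] (t : K) : ℝ :=
  (if t = 0 then 1 else 0) - 1 / Fintype.card K

lemma sum_balancedInd [DecidableEq K] : ∑ t : K, balancedInd t = 0 := by
  have hq : (Fintype.card K : ℝ) ≠ 0 := Nat.cast_ne_zero.2 Fintype.card_ne_zero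
  simp [balancedInd, hq]

lemma sum_balancedInd_sq [DecidableEq K] :
    ∑ t : K, balancedInd t ^ 2 = (Fintype.card K - 1) / Fintype.card K := by
  have hq : (Fintype.card K : ℝ) ≠ 0 := Nat.cast_ne_zero.2 Fintype.card_ne_zero
  have h : ∀ t : K, balancedInd t ^ 2 =
      balancedInd t * (if t = 0 then 1 else 0) - balancedInd t / Fintype.card K := fun t => by
    rw [sq]
    nth_rw 2 [balancedInd]
    ring
  rw [Finset.sum_congr rfl fun t _ => h t, Finset.sum_sub_distrib, ← Finset.sum_div,
    sum_balancedInd]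
  simp [balancedInd, sub_div, hq]

lemma sum_balancedInd_affineMap [DecidableEq K] (W : Finset (V →ᵃ[K] K)) (x : V) :
    ∑ w ∈ W, balancedInd (w x) =
      ((W.filter fun w => w x = 0).card : ℝ) - W.card / Fintype.card K := by
  simp only [balancedInd, Finset.sum_sub_distrib, Finset.sum_boole, Finset.sum_const,
    nsmul_eq_mul, mul_one_div]

variable [Fintype V]

lemma sum_balancedInd_mul_balancedInd [DecidableEq K] [DecidableEq V] (x y : V) :
    ∑ w : V →ᵃ[K] K, balancedInd (w x) * balancedInd (w y) =
      if x = y then (Fintype.card K - 1) / (Fintype.card K : ℝ) ^ 2 * Fintype.card (V →ᵃ[K] K)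
      else 0 := by
  have hq : (Fintype.card K : ℝ) ≠ 0 := Nat.cast_ne_zero.2 Fintype.card_ne_zero
  split_ifs with hxy
  · subst hxy
    let ev : (V →ᵃ[K] K) →+ K := AddMonoidHom.mk' (fun w => w x) fun _ _ => rfl
    have h := card_nsmul_sum_comp_of_surjective ev (fun c => ⟨AffineMap.const K V c, rfl⟩)
      fun t => balancedInd t ^ 2
    simp only [sum_balancedInd_sq, nsmul_eq_mul, ← sq] at h ⊢
    field_simp at h ⊢
    exact h
  · let ev : (V →ᵃ[K] K) →+ K × K := AddMonoidHom.mk' (fun w => (w x, w y)) fun _ _ => rfl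
    have hev : Function.Surjective ev := fun c => by
      obtain ⟨v, hv⟩ := Module.Projective.exists_dual_eq_one K (sub_ne_zero.2 hxy)
      refine ⟨(c.1 - c.2) • (v.toAffineMap - AffineMap.const K V (v y)) + AffineMap.const K V c.2,
        Prod.ext ?_ (by simp [ev])⟩
      simp [ev, ← map_sub, hv]
    have h := card_nsmul_sum_comp_of_surjective ev hev fun t => balancedInd t.1 * balancedInd t.2
    rw [Fintype.sum_prod_type, ← Finset.sum_mul_sum, sum_balancedInd, zero_mul, smul_zero] at h
    exact (smul_eq_zero.1 h).resolve_left Fintype.card_ne_zero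

lemma sum_sq_sum_balancedInd [DecidableEq K] (c : V → ℝ) :
    ∑ w : V →ᵃ[K] K, (∑ x, c x * balancedInd (w x)) ^ 2 =
      (Fintype.card K - 1) / (Fintype.card K : ℝ) ^ 2 * Fintype.card (V →ᵃ[K] K) *
        ∑ x, c x ^ 2 := by
  classical
  calc ∑ w : V →ᵃ[K] K, (∑ x, c x * balancedInd (w x)) ^ 2
      = ∑ x, ∑ y, c x * c y * ∑ w : V →ᵃ[K] K, balancedInd (w x) * balancedInd (w y) := by
        simp_rw [sq, Finset.sum_mul_sum, Finset.mul_sum]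
        rw [Finset.sum_comm]
        refine Finset.sum_congr rfl fun x _ => ?_
        rw [Finset.sum_comm]
        exact Finset.sum_congr rfl fun y _ => Finset.sum_congr rfl fun w _ => by ring
    _ = _ := by
        simp only [sum_balancedInd_mul_balancedInd, mul_ite, mul_zero, Finset.sum_ite_eq,
          Finset.mem_univ, if_true, Finset.mul_sum]
        exact Finset.sum_congr rfl fun x _ => by ring

-- Duality: test the previous identity against the vector `y` of column sums and apply
-- Cauchy-Schwarz.
lemma sum_sq_column_sum_le [DecidableEq K] (W : Finset (V →ᵃ[K] K)) :
    ∑ x, (∑ w ∈ W, balancedInd (w x)) ^ 2 ≤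
      (Fintype.card K - 1) / (Fintype.card K : ℝ) ^ 2 * Fintype.card (V →ᵃ[K] K) * W.card := by
  set y : V → ℝ := fun x => ∑ w ∈ W, balancedInd (w x) with hy
  set κ : ℝ := (Fintype.card K - 1) / (Fintype.card K : ℝ) ^ 2 * Fintype.card (V →ᵃ[K] K) with hκ
  have hq : (1 : ℝ) ≤ Fintype.card K := Nat.one_le_cast.2 Fintype.card_pos
  have hκ0 : 0 ≤ κ := by
    have := sub_nonneg.2 hq
    positivity
  have hsq : (∑ x, y x ^ 2) ^ 2 ≤ W.card * (κ * ∑ x, y x ^ 2) :=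
    calc (∑ x, y x ^ 2) ^ 2 = (∑ w ∈ W, ∑ x, y x * balancedInd (w x)) ^ 2 := by
          rw [Finset.sum_comm]
          simp only [← Finset.mul_sum, hy, sq (∑ _ ∈ W, _)]
      _ ≤ W.card * ∑ w ∈ W, (∑ x, y x * balancedInd (w x)) ^ 2 := sq_sum_le_card_mul_sum_sq
      _ ≤ W.card * ∑ w : V →ᵃ[K] K, (∑ x, y x * balancedInd (w x)) ^ 2 := by
          gcongr
          exact Finset.subset_univ W
      _ = W.card * (κ * ∑ x, y x ^ 2) := by rw [sum_sq_sum_balancedInd]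
  have hnn : 0 ≤ ∑ x, y x ^ 2 := Finset.sum_nonneg fun x _ => sq_nonneg _
  rcases hnn.eq_or_lt with h0 | hpos
  · rw [← h0]
    positivity
  · refine le_of_mul_le_mul_right ?_ hpos
    linarith

lemma card_le_of_deviation [DecidableEq K] {S : Finset V} {W : Finset (V →ᵃ[K] K)} {δ μ : ℝ}
    (hδ : 0 ≤ δ) (hμ : 0 < μ) (hW : μ * Fintype.card (V →ᵃ[K] K) ≤ W.card)
    (hS : ∀ x ∈ S, δ * W.card ≤
      |((W.filter fun w => w x = 0).card : ℝ) - W.card / Fintype.card K|) :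
    δ ^ 2 * μ * S.card ≤ (Fintype.card K - 1) / (Fintype.card K : ℝ) ^ 2 := by
  have hN : (0 : ℝ) < Fintype.card (V →ᵃ[K] K) := Nat.cast_pos.2 Fintype.card_pos
  have hsum : S.card * (δ * W.card) ^ 2 ≤
      (Fintype.card K - 1) / (Fintype.card K : ℝ) ^ 2 * Fintype.card (V →ᵃ[K] K) * W.card :=
    calc S.card * (δ * W.card) ^ 2 ≤ ∑ x ∈ S, (∑ w ∈ W, balancedInd (w x)) ^ 2 := by
          rw [← nsmul_eq_mul]
          refine Finset.card_nsmul_le_sum _ _ _ fun x hx => ?_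
          rw [sum_balancedInd_affineMap, ← sq_abs (_ - _)]
          exact pow_le_pow_left₀ (by positivity) (hS x hx) 2
      _ ≤ ∑ x, (∑ w ∈ W, balancedInd (w x)) ^ 2 :=
          Finset.sum_le_sum_of_subset_of_nonneg (Finset.subset_univ S) fun x _ _ => sq_nonneg _
      _ ≤ _ := sum_sq_column_sum_le W
  refine le_of_mul_le_mul_right ?_ (mul_pos hN ((mul_pos hμ hN).trans_le hW))
  calc δ ^ 2 * μ * S.card * (Fintype.card (V →ᵃ[K] K) * W.card)
      = δ ^ 2 * S.card * W.card * (μ * Fintype.card (V →ᵃ[K] K)) := by ring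
    _ ≤ δ ^ 2 * S.card * W.card * W.card := by gcongr
    _ = S.card * (δ * W.card) ^ 2 := by ring
    _ ≤ _ := hsum.trans_eq (mul_assoc _ _ _)

end Mixing

section MinimumDistance

variable {K V : Type*} [Field K] [Fintype K]

lemma exists_affineMap_vanishing_card_filter_le [DecidableEq K] {V : Type*} [AddCommGroup V]
    [Module K V] [Finite V] {x₀ : V} {S : Finset V}
    (hx₀ : x₀ ∉ S) :
    ∃ u : V →ᵃ[K] K, u x₀ = 0 ∧ Fintype.card K * (S.filter fun x => u x = 0).card ≤ S.card := by
  have : Finite (Module.Dual K V) := DFunLike.finite _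
  have : Fintype (Module.Dual K V) := Fintype.ofFinite _
  have hcount : ∀ x ∈ S, Fintype.card K *
      (Finset.univ.filter fun v : Module.Dual K V => v (x - x₀) = 0).card =
        Fintype.card (Module.Dual K V) := fun x hx => by
    have hne : x - x₀ ≠ 0 := sub_ne_zero.2 fun h => hx₀ (h ▸ hx)
    obtain ⟨v, hv⟩ := Module.Projective.exists_dual_eq_one K hne
    refine card_mul_card_filter_of_surjective
      (Module.Dual.eval K V (x - x₀)).toAddMonoidHom (fun c => ⟨c • v, ?_⟩) 0
    simp [-map_sub, hv]
  obtain ⟨v, -, hv⟩ : ∃ v ∈ (Finset.univ : Finset (Module.Dual K V)),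
      Fintype.card K * (S.filter fun x => v (x - x₀) = 0).card ≤ S.card := by
    refine Finset.exists_le_of_sum_le Finset.univ_nonempty (le_of_eq ?_)
    rw [← Finset.mul_sum, Finset.sum_const, Finset.card_univ, smul_eq_mul, mul_comm _ S.card,
      ← smul_eq_mul S.card, ← Finset.sum_const, ← Finset.sum_congr rfl hcount, ← Finset.mul_sum]
    simp only [Finset.card_filter]
    rw [Finset.sum_comm]
  refine ⟨v.toAffineMap - AffineMap.const K V (v x₀), by simp, ?_⟩
  simpa only [AffineMap.coe_sub, Pi.sub_apply, LinearMap.coe_toAffineMap, AffineMap.coe_const,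
    Function.const_apply, ← map_sub] using hv

lemma exists_mem_polyDegLE_separating {V : Type*} [AddCommGroup V] [Module K V]
    [Finite V] {t : ℕ} {x₀ : V} {S : Finset V} (hx₀ : x₀ ∉ S)
    (hS : S.card < Fintype.card K ^ t) :
    ∃ φ ∈ polyDegLE K V ((Fintype.card K - 1) * t), φ x₀ = 1 ∧ ∀ x ∈ S, φ x = 0 := by
  classical
  induction t generalizing S with
  | zero =>
    obtain rfl : S = ∅ := by simpa using hS
    exact ⟨1, one_mem_polyDegLE _, rfl, by simp⟩
  | succ t ih =>
    obtain ⟨u, hu₀, hu⟩ := exists_affineMap_vanishing_card_filter_le (K := K) hx₀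
    have hlt : (S.filter fun x => u x = 0).card < Fintype.card K ^ t := by
      refine lt_of_mul_lt_mul_left (hu.trans_lt (hS.trans_eq ?_)) (Nat.zero_le (Fintype.card K))
      exact pow_succ' _ _
    obtain ⟨φ, hφ, hφ₀, hφS⟩ := ih (fun h => hx₀ (Finset.mem_filter.1 h).1) hlt
    refine ⟨φ * hyperplaneInd u, mul_mem_polyDegLE hφ (hyperplaneInd_mem_polyDegLE u), ?_,
      fun x hx => ?_⟩
    · rw [Pi.mul_apply, hyperplaneInd_apply, if_pos hu₀, hφ₀, mul_one]
    · rw [Pi.mul_apply, hyperplaneInd_apply]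
      split_ifs with hux
      · rw [hφS x (Finset.mem_filter.2 ⟨hx, hux⟩), zero_mul]
      · exact mul_zero _

lemma eq_zero_of_mem_polyDual_of_card_le {V : Type*} [AddCommGroup V] [Module K V] [Fintype V]
    {t : ℕ} {h : V → K}
    (hh : h ∈ polyDual K V ((Fintype.card K - 1) * t)) {S : Finset V} (hS : ∀ x, h x ≠ 0 → x ∈ S)
    (hcard : S.card ≤ Fintype.card K ^ t) : h = 0 := by
  classical
  by_contra hne
  obtain ⟨x₀, hx₀⟩ := Function.ne_iff.1 hne
  obtain ⟨φ, hφ, hφ₀, hφS⟩ := exists_mem_polyDegLE_separating (K := K) (Finset.notMem_erase x₀ S)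
    ((Finset.card_erase_lt_of_mem (hS x₀ hx₀)).trans_le hcard)
  refine hx₀ ?_
  have hsum : h ⬝ᵥ φ = h x₀ * φ x₀ := by
    refine Finset.sum_eq_single x₀ (fun x _ hx => ?_) fun hx => absurd (Finset.mem_univ x₀) hx
    by_cases hhx : h x = 0
    · rw [hhx, zero_mul]
    · rw [hφS x (Finset.mem_erase.2 ⟨hx, hS x hhx⟩), mul_zero]
  rw [hφ₀, mul_one] at hsum
  rw [← hsum, hh φ hφ, Pi.zero_apply]

end MinimumDistance

section Gluing

lemma exists_mul_eq_of_mul_comm {K X ι : Type*} [Field K] {W : Finset ι} {φ R : ι → X → K}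
    (h : ∀ w ∈ W, ∀ w' ∈ W, R w * φ w' = R w' * φ w) :
    ∃ T : X → K, ∀ w ∈ W, ∀ x, φ w x ≠ 0 → T x * φ w x = R w x := by
  have hpt : ∀ x, ∃ t : K, ∀ w ∈ W, φ w x ≠ 0 → t * φ w x = R w x := fun x => by
    by_cases hx : ∃ w ∈ W, φ w x ≠ 0
    · obtain ⟨w', hw', hne⟩ := hx
      refine ⟨R w' x / φ w' x, fun w hw _ => ?_⟩
      rw [div_mul_eq_mul_div, div_eq_iff hne]
      exact (congrFun (h w hw w' hw') x).symm
    · exact ⟨0, fun w hw hne => absurd ⟨w, hw, hne⟩ hx⟩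
  choose T hT using hpt
  exact ⟨T, fun w hw x => hT x w hw⟩

lemma hammingDist_le_of_hammingDist_mul_le {K X ι : Type*} [Field K] [DecidableEq K] [Fintype X]
    {W : Finset ι} {m : ι → X → K} {f P : X → K} {c κ : ℝ} (hW : W.Nonempty) (hc : 0 < c)
    (h : ∀ w ∈ W, (hammingDist (f * m w) (P * m w) : ℝ) ≤ κ) :
    (hammingDist f P : ℝ) ≤
      (Finset.univ.filter fun x => ((W.filter fun w => m w x ≠ 0).card : ℝ) < c * W.card).card +
        κ / c := by
  classical
  set E := Finset.univ.filter fun x => ((W.filter fun w => m w x ≠ 0).card : ℝ) < c * W.card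
  set B := (Finset.univ.filter fun x => f x ≠ P x) \ E
  have hB : (B.card : ℝ) ≤ κ / c := by
    have hcount := Finset.card_nsmul_le_card_nsmul (R := ℝ) (s := B) (t := W) (m := c * W.card)
      (n := κ) (fun x w => (f * m w) x ≠ (P * m w) x) (fun x hx => ?_) (fun w hw => ?_)
    · rw [le_div_iff₀ hc]
      refine le_of_mul_le_mul_left ?_ (Nat.cast_pos.2 hW.card_pos : (0 : ℝ) < W.card)
      rw [nsmul_eq_mul, nsmul_eq_mul] at hcount
      linarith
    · simp only [B, E, Finset.mem_sdiff, Finset.mem_filter_univ, not_lt] at hx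
      refine hx.2.trans (Nat.cast_le.2 (Finset.card_le_card fun w hw => ?_))
      rw [Finset.mem_filter] at hw
      exact (Finset.mem_bipartiteAbove _).2 ⟨hw.1, fun heq => hx.1 (mul_right_cancel₀ hw.2 heq)⟩
    · refine le_trans (Nat.cast_le.2 (Finset.card_le_card ?_)) (h w hw)
      exact Finset.filter_subset_filter _ (Finset.subset_univ B)
  have hdist : hammingDist f P ≤ E.card + B.card := by
    refine (Finset.card_le_card fun x hx => ?_).trans (Finset.card_union_le E B)
    rw [Finset.union_sdiff_self_eq_union]
    exact Finset.mem_union_right _ hx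
  calc (hammingDist f P : ℝ) ≤ E.card + B.card := by exact_mod_cast hdist
    _ ≤ E.card + κ / c := by gcongr

lemma card_le_card_filter_of_sq_le_sum {ι : Type*} [Fintype ι] {a : ι → ℝ} {η : ℝ}
    (ha : ∀ i, a i ≤ Fintype.card ι) (h : (η * Fintype.card ι) ^ 2 ≤ ∑ i, a i) :
    η ^ 2 / 2 * Fintype.card ι ≤
      (Finset.univ.filter fun i => η ^ 2 / 2 * Fintype.card ι ≤ a i).card := by
  rcases isEmpty_or_nonempty ι with _ | _
  · simp
  set N : ℝ := (Fintype.card ι : ℝ)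
  set W := Finset.univ.filter fun i => η ^ 2 / 2 * N ≤ a i
  have hN : 0 < N := Nat.cast_pos.2 Fintype.card_pos
  have hsum : ∑ i, a i ≤ ∑ i, ((if i ∈ W then N else 0) + η ^ 2 / 2 * N) := by
    refine Finset.sum_le_sum fun i _ => ?_
    split_ifs with hi
    · exact (ha i).trans (le_add_of_nonneg_right (by positivity))
    · rw [zero_add]
      exact (not_le.1 fun h => hi ((Finset.mem_filter_univ i).2 h)).le
  rw [Finset.sum_add_distrib, Finset.sum_ite_mem, Finset.univ_inter, Finset.sum_const,
    Finset.sum_const, Finset.card_univ, nsmul_eq_mul, nsmul_eq_mul] at hsum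
  refine le_of_mul_le_mul_right ?_ hN
  linarith

variable {K V : Type*} [Field K] [Fintype K] [DecidableEq K] [AddCommGroup V] [Module K V]
  [Fintype V]

lemma mul_eq_mul_of_hammingDist_add_le {s t : ℕ} {f R R' φ φ' : V → K}
    (hφ : φ ∈ polyDegLE K V s) (hφ' : φ' ∈ polyDegLE K V s)
    (hR : R ∈ polyDual K V ((Fintype.card K - 1) * t + s))
    (hR' : R' ∈ polyDual K V ((Fintype.card K - 1) * t + s))
    (hdist : hammingDist (f * φ) R + hammingDist (f * φ') R' ≤ Fintype.card K ^ t) :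
    R * φ' = R' * φ := by
  classical
  refine sub_eq_zero.1 (eq_zero_of_mem_polyDual_of_card_le
    (Submodule.sub_mem _ (mul_mem_polyDual hR hφ') (mul_mem_polyDual hR' hφ))
    (S := (Finset.univ.filter fun x => (f * φ) x ≠ R x) ∪
      (Finset.univ.filter fun x => (f * φ') x ≠ R' x)) (fun x hx => ?_)
    ((Finset.card_union_le _ _).trans hdist))
  contrapose! hx
  simp only [Finset.mem_union, Finset.mem_filter_univ, not_or, not_not, Pi.mul_apply] at hx
  rw [Pi.sub_apply, Pi.mul_apply, Pi.mul_apply, ← hx.1, ← hx.2]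
  ring

lemma exists_mul_affineMap_eq {e : ℕ} {W : Finset (V →ᵃ[K] K)} {R : (V →ᵃ[K] K) → V → K}
    (hcomm : ∀ w ∈ W, ∀ w' ∈ W, R w * ⇑w' = R w' * ⇑w)
    (hR : ∀ w ∈ W, R w ∈ polyDual K V ((Fintype.card K - 1) * (e + 1)))
    (hW : (Finset.univ.filter fun x => ∀ w ∈ W, w x = 0).card ≤ Fintype.card K ^ e) :
    ∃ T : V → K, ∀ w ∈ W, T * ⇑w = R w := by
  obtain ⟨T, hT⟩ := exists_mul_eq_of_mul_comm (φ := fun w : V →ᵃ[K] K => ⇑w) hcomm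
  refine ⟨T, fun w hw => funext fun x => ?_⟩
  by_cases hx : w x = 0
  · have hzero : R w * hyperplaneInd w = 0 := by
      refine eq_zero_of_mem_polyDual_of_card_le
        (mul_mem_polyDual (hR w hw) (hyperplaneInd_mem_polyDegLE w)) (fun y hy => ?_) hW
      rw [Pi.mul_apply, hyperplaneInd_apply, mul_ite, mul_one, mul_zero, ite_ne_right_iff] at hy
      refine Finset.mem_filter_univ _ |>.2 fun w' hw' => ?_
      have h := congrFun (hcomm w hw w' hw') y
      rw [Pi.mul_apply, Pi.mul_apply, hy.1, mul_zero] at h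
      exact (mul_eq_zero.1 h).resolve_left hy.2
    have h := congrFun hzero x
    rw [Pi.mul_apply, hyperplaneInd_apply, if_pos hx, mul_one] at h
    rw [Pi.mul_apply, hx, mul_zero, h, Pi.zero_apply]
  · exact hT w hw x hx

end Gluing

section Ternary

variable {V : Type*} [AddCommGroup V] [Module F3 V] [Fintype V]

lemma card_le_of_two_thirds_le_card_filter {S : Finset V} {W : Finset (V →ᵃ[F3] F3)} {μ : ℝ}
    (hμ : 0 < μ) (hW : μ * Fintype.card (V →ᵃ[F3] F3) ≤ W.card)
    (hS : ∀ x ∈ S, 2 / 3 * (W.card : ℝ) ≤ (W.filter fun w => w x = 0).card) :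
    (S.card : ℝ) ≤ 2 / μ := by
  have h := card_le_of_deviation (δ := 1 / 3) (by norm_num) hμ hW fun x hx => by
    refine le_trans ?_ (le_abs_self _)
    have := hS x hx
    rw [ZMod.card]
    push_cast
    linarith
  rw [ZMod.card] at h
  rw [le_div_iff₀ hμ]
  norm_num at h
  linarith

lemma card_le_of_card_filter_le_one_sixth {S : Finset V} {W : Finset (V →ᵃ[F3] F3)} {μ : ℝ}
    (hμ : 0 < μ) (hW : μ * Fintype.card (V →ᵃ[F3] F3) ≤ W.card)
    (hS : ∀ x ∈ S, ((W.filter fun w => w x = 0).card : ℝ) ≤ 1 / 6 * W.card) :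
    (S.card : ℝ) ≤ 8 / μ := by
  have h := card_le_of_deviation (δ := 1 / 6) (by norm_num) hμ hW fun x hx => by
    refine le_trans ?_ (neg_le_abs _)
    have := hS x hx
    rw [ZMod.card]
    push_cast
    linarith
  rw [ZMod.card] at h
  rw [le_div_iff₀ hμ]
  norm_num at h
  linarith

-- `P (u - v) (u + v) = P u² - P v²`, and `(u - v, u + v)` determines `(u, v)` in characteristic 3.
lemma card_sq_le_sum_card_multipliers {e : ℕ} {P : V → F3} {G : Finset (V →ᵃ[F3] F3)}
    (hG : ∀ u ∈ G, P * hyperplaneInd u ∈ polyDual F3 V e) :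
    G.card ^ 2 ≤ ∑ w : V →ᵃ[F3] F3, Nat.card (multipliers e (P * ⇑w)) := by
  classical
  have hcard : ∀ w : V →ᵃ[F3] F3, Nat.card (multipliers e (P * ⇑w)) =
      (Finset.univ.filter fun b => b ∈ multipliers e (P * ⇑w)).card := fun w => by
    rw [Nat.card_eq_fintype_card, Fintype.card_subtype]
  simp only [hcard]
  rw [sq, ← Finset.card_product, ← Finset.card_sigma]
  refine Finset.card_le_card_of_injOn (fun p => ⟨p.1 - p.2, p.1 + p.2⟩) (fun p hp => ?_)
    fun p _ p' _ heq => ?_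
  · rw [Finset.mem_coe, Finset.mem_product] at hp
    simp only [Finset.mem_coe, Finset.mem_sigma, Finset.mem_univ, Finset.mem_filter_univ, true_and,
      mem_multipliers]
    convert Submodule.sub_mem _ (hG p.2 hp.2) (hG p.1 hp.1) using 1
    simp only [hyperplaneInd, AffineMap.coe_sub, AffineMap.coe_add, ZMod.card]
    ring
  · obtain ⟨hsub, hadd⟩ : p.1 - p.2 = p'.1 - p'.2 ∧ p.1 + p.2 = p'.1 + p'.2 := by
      simpa only [Sigma.mk.injEq, heq_eq_eq] using heq
    have htwo : (2 : F3) • p.1 = (2 : F3) • p'.1 := by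
      rw [two_smul, two_smul, ← sub_add_add_cancel p.1 p.1 p.2, ← sub_add_add_cancel p'.1 p'.1 p'.2,
        hsub, hadd]
    have hfst : p.1 = p'.1 := smul_right_injective _ (by decide : (2 : F3) ≠ 0) htwo
    exact Prod.ext hfst (add_left_cancel (hfst ▸ hadd))

lemma exists_finset_le_card_multipliers {e : ℕ} {P : V → F3} {G : Finset (V →ᵃ[F3] F3)} {η : ℝ}
    (hG : ∀ u ∈ G, P * hyperplaneInd u ∈ polyDual F3 V e) (hη₀ : 0 ≤ η)
    (hη : η * Fintype.card (V →ᵃ[F3] F3) ≤ G.card) :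
    ∃ W : Finset (V →ᵃ[F3] F3), η ^ 2 / 2 * Fintype.card (V →ᵃ[F3] F3) ≤ W.card ∧
      ∀ w ∈ W, η ^ 2 / 2 * Fintype.card (V →ᵃ[F3] F3) ≤ Nat.card (multipliers e (P * ⇑w)) := by
  refine ⟨_, card_le_card_filter_of_sq_le_sum
    (a := fun w : V →ᵃ[F3] F3 => (Nat.card (multipliers e (P * ⇑w)) : ℝ))
    (fun w => ?_) (le_trans (pow_le_pow_left₀ (by positivity) hη 2) ?_),
    fun w hw => (Finset.mem_filter_univ w).1 hw⟩
  · rw [← Nat.card_eq_fintype_card]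
    exact Nat.cast_le.2 (Nat.card_le_card_of_injective _ Subtype.val_injective)
  · exact_mod_cast card_sq_le_sum_card_multipliers hG

lemma exists_mul_affineMap_eq_of_hammingDist_le {e : ℕ} {P : V → F3} {W : Finset (V →ᵃ[F3] F3)}
    {R : (V →ᵃ[F3] F3) → V → F3} {μ : ℝ} (hμ : 0 < μ)
    (hW : μ * Fintype.card (V →ᵃ[F3] F3) ≤ W.card) (hμe : 2 ≤ μ * 3 ^ e)
    (hR : ∀ w ∈ W, R w ∈ polyDual F3 V (2 * (e + 1) + 1))
    (hdist : ∀ w ∈ W, (hammingDist (P * ⇑w) (R w) : ℝ) ≤ 1 / μ) :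
    ∃ T : V → F3, ∀ w ∈ W, T * ⇑w = R w := by
  have hle : 2 / μ ≤ 3 ^ e := (div_le_iff₀' hμ).2 hμe
  refine exists_mul_affineMap_eq (e := e) (fun w hw w' hw' => ?_)
    (fun w hw => ?_) ?_
  · refine mul_eq_mul_of_hammingDist_add_le (f := P) (t := e + 1) (affineMap_mem_polyDegLE w)
      (affineMap_mem_polyDegLE w') (by rw [ZMod.card]; exact hR w hw)
      (by rw [ZMod.card]; exact hR w' hw') ?_
    rw [ZMod.card]
    have h : (hammingDist (P * ⇑w) (R w) + hammingDist (P * ⇑w') (R w') : ℝ) ≤ 3 ^ (e + 1) :=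
      calc _ ≤ 1 / μ + 1 / μ := add_le_add (hdist w hw) (hdist w' hw')
        _ = 2 / μ := by ring
        _ ≤ 3 ^ e := hle
        _ ≤ 3 ^ (e + 1) := pow_le_pow_right₀ (by norm_num) e.le_succ
    exact_mod_cast h
  · rw [ZMod.card]
    exact polyDual_antitone (Nat.le_succ _) (hR w hw)
  · rw [ZMod.card]
    have h := card_le_of_two_thirds_le_card_filter
      (S := Finset.univ.filter fun x => ∀ w ∈ W, w x = 0) hμ hW fun x hx => by
        rw [Finset.filter_true_of_mem ((Finset.mem_filter_univ _).1 hx)]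
        linarith [(Nat.cast_nonneg W.card : (0 : ℝ) ≤ _)]
    exact_mod_cast h.trans hle

lemma exists_mem_polyDual_hammingDist_le_of_mul_affineMap {e : ℕ} {P : V → F3}
    {W : Finset (V →ᵃ[F3] F3)} {R : (V →ᵃ[F3] F3) → V → F3} {μ : ℝ} (hμ : 0 < μ)
    (hW : μ * Fintype.card (V →ᵃ[F3] F3) ≤ W.card) (hμe : 2 ≤ μ * 3 ^ e)
    (hR : ∀ w ∈ W, R w ∈ polyDual F3 V (2 * (e + 1) + 1))
    (hdist : ∀ w ∈ W, (hammingDist (P * ⇑w) (R w) : ℝ) ≤ 1 / μ) :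
    ∃ Q ∈ polyDual F3 V (2 * (e + 1) + 2), (hammingDist P Q : ℝ) ≤ 6 / μ := by
  classical
  obtain ⟨T, hT⟩ := exists_mul_affineMap_eq_of_hammingDist_le hμ hW hμe hR hdist
  have hWT : W.card ≤ Nat.card (multipliers (2 * (e + 1) + 1) T) := by
    rw [Nat.card_eq_fintype_card, Fintype.card_subtype]
    refine Finset.card_le_card fun w hw => (Finset.mem_filter_univ _).2 (mem_multipliers.2 ?_)
    rw [hT w hw]
    exact hR w hw
  obtain ⟨Q, hQ, hTQ⟩ :=
    exists_mem_polyDual_succ_hammingDist_le hμ (hW.trans (Nat.cast_le.2 hWT))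
  have hWne : W.Nonempty := by
    rw [← Finset.card_pos, ← Nat.cast_pos (α := ℝ)]
    exact (mul_pos hμ (Nat.cast_pos.2 Fintype.card_pos)).trans_le hW
  have hPT := hammingDist_le_of_hammingDist_mul_le (f := P) (P := T)
    (m := fun w : V →ᵃ[F3] F3 => ⇑w) (c := 1 / 3) (κ := 1 / μ) hWne (by norm_num)
    fun w hw => by rw [hT w hw]; exact hdist w hw
  have hexc := card_le_of_two_thirds_le_card_filter hμ hW (S := Finset.univ.filter fun x =>
    ((W.filter fun w => w x ≠ 0).card : ℝ) < 1 / 3 * W.card) fun x hx => by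
      have h := Finset.card_filter_add_card_filter_not (s := W) (fun w => w x = 0)
      rw [← Nat.cast_inj (R := ℝ), Nat.cast_add] at h
      linarith [(Finset.mem_filter_univ _).1 hx]
  refine ⟨Q, hQ, ?_⟩
  calc (hammingDist P Q : ℝ) ≤ hammingDist P T + hammingDist T Q := by
        exact_mod_cast hammingDist_triangle P T Q
    _ ≤ (2 / μ + 1 / μ / (1 / 3)) + 1 / μ :=
        add_le_add (hPT.trans (add_le_add_left hexc _)) hTQ
    _ = 6 / μ := by ring

lemma exists_mul_hyperplaneInd_eq {e : ℕ} {f : V → F3} {G : Finset (V →ᵃ[F3] F3)}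
    {g : (V →ᵃ[F3] F3) → V → F3} (hsupp : ∀ u ∈ G, ∀ x, u x ≠ 0 → g u x = 0)
    (hg : ∀ u ∈ G, g u ∈ polyDual F3 V (2 * (e + 1)))
    (hdist : ∀ u ∈ G, 12 * hammingDist (f * hyperplaneInd u) (g u) ≤ 3 ^ (e + 1)) :
    ∃ P : V → F3, ∀ u ∈ G, P * hyperplaneInd u = g u := by
  have hcomm : ∀ u ∈ G, ∀ v ∈ G, g u * hyperplaneInd v = g v * hyperplaneInd u :=
    fun u hu v hv => by
      refine mul_eq_mul_of_hammingDist_add_le (f := f) (t := e) (hyperplaneInd_mem_polyDegLE u)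
        (hyperplaneInd_mem_polyDegLE v) (by rw [ZMod.card]; exact hg u hu)
        (by rw [ZMod.card]; exact hg v hv) ?_
      have h₁ := hdist u hu
      have h₂ := hdist v hv
      rw [pow_succ] at h₁ h₂
      rw [ZMod.card]
      omega
  obtain ⟨P, hP⟩ := exists_mul_eq_of_mul_comm hcomm
  refine ⟨P, fun u hu => funext fun x => ?_⟩
  by_cases hx : u x = 0
  · exact hP u hu x (by rw [hyperplaneInd_apply, if_pos hx]; exact one_ne_zero)
  · rw [Pi.mul_apply, hyperplaneInd_apply, if_neg hx, mul_zero, hsupp u hu x hx]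

-- The local corrections `g u` glue to one function `P`, and `P` is close to the dual code because
-- `P * w` is, for many affine forms `w`.
lemma exists_mem_polyDual_hammingDist_le_of_hyperplanes {e : ℕ} {f : V → F3}
    {G : Finset (V →ᵃ[F3] F3)} {g : (V →ᵃ[F3] F3) → V → F3} {η : ℝ}
    (hsupp : ∀ u ∈ G, ∀ x, u x ≠ 0 → g u x = 0)
    (hg : ∀ u ∈ G, g u ∈ polyDual F3 V (2 * (e + 1)))
    (hdist : ∀ u ∈ G, 12 * hammingDist (f * hyperplaneInd u) (g u) ≤ 3 ^ (e + 1))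
    (hη₀ : 0 < η) (hη₁ : η ≤ 1) (hη : η * Fintype.card (V →ᵃ[F3] F3) ≤ G.card)
    (he : 20 ≤ η ^ 2 * 3 ^ (e + 1)) :
    ∃ Q ∈ polyDual F3 V (2 * (e + 2)), 2 * hammingDist f Q ≤ 3 ^ (e + 2) := by
  obtain ⟨P, hP⟩ := exists_mul_hyperplaneInd_eq hsupp hg hdist
  have hGne : G.Nonempty := by
    rw [← Finset.card_pos, ← Nat.cast_pos (α := ℝ)]
    exact (mul_pos hη₀ (Nat.cast_pos.2 Fintype.card_pos)).trans_le hη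
  have hfP := hammingDist_le_of_hammingDist_mul_le (f := f) (P := P) (m := hyperplaneInd)
    (c := 1 / 6) (κ := 3 ^ (e + 1) / 12) hGne (by norm_num) fun u hu => by
      rw [hP u hu, le_div_iff₀' (by norm_num)]
      exact_mod_cast hdist u hu
  have hexc := card_le_of_card_filter_le_one_sixth hη₀ hη (S := Finset.univ.filter fun x =>
    ((G.filter fun u => hyperplaneInd u x ≠ 0).card : ℝ) < 1 / 6 * G.card) fun x hx => by
      have h := (Finset.mem_filter_univ _).1 hx
      simp only [hyperplaneInd_apply, ite_ne_right_iff, ne_eq, one_ne_zero, not_false_eq_true,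
        and_true] at h
      exact h.le
  obtain ⟨W, hW, hWm⟩ := exists_finset_le_card_multipliers
    (fun u hu => by rw [hP u hu]; exact hg u hu) hη₀.le hη
  have hμ : 0 < η ^ 2 / 2 := by positivity
  choose! R hR hPR using fun w hw => exists_mem_polyDual_succ_hammingDist_le hμ (hWm w hw)
  obtain ⟨Q, hQ, hPQ⟩ := exists_mem_polyDual_hammingDist_le_of_mul_affineMap hμ hW
    (by rw [pow_succ (3 : ℝ)] at he; linarith) hR hPR
  refine ⟨Q, hQ, ?_⟩
  have h : 2 * (hammingDist f Q : ℝ) ≤ 3 ^ (e + 2) :=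
    calc 2 * (hammingDist f Q : ℝ) ≤ 2 * (hammingDist f P + hammingDist P Q) := by
          gcongr
          exact_mod_cast hammingDist_triangle f P Q
      _ ≤ 2 * (8 / η + 3 ^ (e + 1) / 12 / (1 / 6) + 6 / (η ^ 2 / 2)) := by
          gcongr
          exact hfP.trans (add_le_add_left hexc _)
      _ ≤ 2 * (8 / η ^ 2 + 3 ^ (e + 1) / 12 / (1 / 6) + 6 / (η ^ 2 / 2)) := by
          gcongr
          exact pow_le_of_le_one hη₀.le hη₁ two_ne_zero
      _ = 3 ^ (e + 1) + 2 * (20 / η ^ 2) := by field_simp; ring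
      _ ≤ 3 ^ (e + 1) + 2 * 3 ^ (e + 1) := by
          gcongr
          exact (div_le_iff₀' (by positivity)).2 he
      _ = 3 ^ (e + 2) := by ring
  exact_mod_cast h

end Ternary

section FiniteDifferences

variable {X A : Type*} [AddCommGroup X] [AddCommGroup A]

/-- Functions all of whose `(e + 1)`-fold iterated differences vanish: the functions of degree at
most `e` between abelian groups. -/
def IsFwdDiffDegLE : ℕ → (X → A) → Prop
  | 0, f => ∀ h, fwdDiff h f = 0
  | e + 1, f => ∀ h, IsFwdDiffDegLE e (fwdDiff h f)

variable [Fintype X] [DecidableEq A]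

lemma card_filter_ne_zero_of_fwdDiff_eq_zero {f : X → A} (hf : f ≠ 0) (h : ∀ h, fwdDiff h f = 0) :
    (Finset.univ.filter fun x => f x ≠ 0).card = Fintype.card X := by
  obtain ⟨x₀, hx₀⟩ := Function.ne_iff.1 hf
  refine congrArg Finset.card (Finset.filter_true_of_mem fun x _ => ?_)
  have hx := congrFun (h (x - x₀)) x₀
  rw [fwdDiff, add_sub_cancel, Pi.zero_apply, sub_eq_zero] at hx
  rwa [hx]

lemma card_filter_fwdDiff_ne_zero_le (f : X → A) (h : X) :
    (Finset.univ.filter fun x => fwdDiff h f x ≠ 0).card ≤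
      2 * (Finset.univ.filter fun x => f x ≠ 0).card := by
  classical
  have hshift : (Finset.univ.filter fun x => f (x + h) ≠ 0).card =
      (Finset.univ.filter fun x => f x ≠ 0).card :=
    Finset.card_equiv (Equiv.addRight h) fun x => by simp
  rw [two_mul]
  nth_rw 1 [← hshift]
  refine (Finset.card_le_card fun x hx => ?_).trans (Finset.card_union_le _ _)
  rw [Finset.mem_union, Finset.mem_filter_univ, Finset.mem_filter_univ]
  contrapose! hx
  rw [Finset.mem_filter_univ, fwdDiff, hx.1, hx.2, sub_zero, not_not]

lemma card_le_two_pow_mul_card_filter_ne_zero {e : ℕ} {f : X → A} (hf : f ≠ 0)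
    (hdeg : IsFwdDiffDegLE e f) :
    Fintype.card X ≤ 2 ^ e * (Finset.univ.filter fun x => f x ≠ 0).card := by
  induction e generalizing f with
  | zero => rw [pow_zero, one_mul, card_filter_ne_zero_of_fwdDiff_eq_zero hf hdeg]
  | succ e ih =>
    by_cases hconst : ∀ h, fwdDiff h f = 0
    · rw [card_filter_ne_zero_of_fwdDiff_eq_zero hf hconst]
      exact Nat.le_mul_of_pos_left _ (by positivity)
    · push Not at hconst
      obtain ⟨h, hh⟩ := hconst
      refine (ih hh (hdeg h)).trans ?_
      rw [pow_succ, mul_assoc]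
      exact Nat.mul_le_mul_left _ (card_filter_fwdDiff_ne_zero_le f h)

end FiniteDifferences

section Flats

variable {K V : Type*} [Field K] [Fintype K] [AddCommGroup V] [Module K V] {d : ℕ}

/-- The indicator function of the flat cut out by the affine forms `u i`. -/
def flatInd (u : Fin d → V →ᵃ[K] K) : V → K := ∏ i, hyperplaneInd (u i)

lemma flatInd_apply [DecidableEq K] (u : Fin d → V →ᵃ[K] K) (x : V) :
    flatInd u x = if ∀ i, u i x = 0 then 1 else 0 := by
  simp only [flatInd, Finset.prod_apply, hyperplaneInd_apply, Finset.prod_boole,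
    Finset.mem_univ, true_imp_iff]

lemma flatInd_mem_polyDegLE (u : Fin d → V →ᵃ[K] K) :
    flatInd u ∈ polyDegLE K V ((Fintype.card K - 1) * d) := by
  have h := prod_mem_polyDegLE Finset.univ fun i _ => hyperplaneInd_mem_polyDegLE (u i)
  rwa [Finset.sum_const, Finset.card_univ, Fintype.card_fin, smul_eq_mul, mul_comm] at h

lemma flatInd_cons (u : V →ᵃ[K] K) (w : Fin d → V →ᵃ[K] K) :
    flatInd (Fin.cons u w : Fin (d + 1) → V →ᵃ[K] K) = hyperplaneInd u * flatInd w := by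
  simp only [flatInd, Fin.prod_univ_succ, Fin.cons_zero, Fin.cons_succ]

variable [Fintype V]

variable (K V d) in
/-- The tuples of `d` affine forms with linearly independent linear parts; each cuts out a flat of
codimension `d`. -/
noncomputable def flatTuples : Finset (Fin d → V →ᵃ[K] K) :=
  Finset.univ.filter fun u => LinearIndependent K fun i => (u i).linear

lemma mem_flatTuples {u : Fin d → V →ᵃ[K] K} :
    u ∈ flatTuples K V d ↔ LinearIndependent K fun i => (u i).linear :=
  Finset.mem_filter_univ u

variable [DecidableEq K]

lemma dotProduct_flatInd (f : V → K) (u : Fin d → V →ᵃ[K] K) :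
    f ⬝ᵥ flatInd u = ∑ x with ∀ i, u i x = 0, f x := by
  simp only [dotProduct, flatInd_apply, mul_ite, mul_one, mul_zero, Finset.sum_filter]

variable (d) in
/-- The tuples in `flatTuples` whose flat detects `f`, that is, on whose flat the sum of `f` is not
zero. -/
noncomputable def rejecting (f : V → K) : Finset (Fin d → V →ᵃ[K] K) :=
  (flatTuples K V d).filter fun u => f ⬝ᵥ flatInd u ≠ 0

lemma card_pow_mul_card_flatTuples_filter (x : V) :
    Fintype.card K ^ d * ((flatTuples K V d).filter fun u => ∀ i, u i x = 0).card =
      (flatTuples K V d).card := by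
  have hfib : ∀ c : Fin d → K, ((flatTuples K V d).filter fun u => (fun i => u i x) = c).card =
      ((flatTuples K V d).filter fun u => ∀ i, u i x = 0).card := fun c => by
    refine Finset.card_equiv (Equiv.subRight fun i => AffineMap.const K V (c i)) fun u => ?_
    simp [mem_flatTuples, funext_iff, sub_eq_zero]
  have hsum := Finset.card_eq_sum_card_fiberwise (f := fun u : Fin d → V →ᵃ[K] K => fun i => u i x)
    (s := flatTuples K V d) (t := Finset.univ) fun _ _ => Finset.mem_coe.2 (Finset.mem_univ _)
  rw [hsum, Finset.sum_congr rfl fun c _ => hfib c, Finset.sum_const, Finset.card_univ,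
    Fintype.card_fun, Fintype.card_fin, smul_eq_mul]

-- Perturbing the forms by multiples of a form `b` with `b x = 0` and `b y = 1` keeps them zero at
-- `x` and moves their values at `y` freely.
lemma card_pow_mul_card_flatTuples_filter_filter_le {x y : V} (hxy : x ≠ y) :
    Fintype.card K ^ d * (((flatTuples K V d).filter fun u => ∀ i, u i x = 0).filter
      fun u => ∀ i, u i y = 0).card ≤ ((flatTuples K V d).filter fun u => ∀ i, u i x = 0).card := by
  obtain ⟨v, hv⟩ := Module.Projective.exists_dual_eq_one K (sub_ne_zero.2 hxy.symm)
  set b : V →ᵃ[K] K := v.toAffineMap - AffineMap.const K V (v x)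
  have hbx : b x = 0 := sub_self (v x)
  have hby : b y = 1 := (map_sub v y x).symm.trans hv
  have hbv : b.linear (y - x) = 1 := by
    rw [← vsub_eq_sub, AffineMap.linearMap_vsub, hbx, hby, vsub_eq_sub, sub_zero]
  rw [← Fintype.card_fin d, ← Fintype.card_fun, ← Finset.card_univ, ← Finset.card_product,
    Fintype.card_fin]
  refine Finset.card_le_card_of_injOn (fun p i => p.2 i + p.1 i • b) (fun ⟨t, u⟩ h => ?_)
    fun ⟨t, u⟩ h ⟨t', u'⟩ h' heq => ?_
  · simp only [Finset.coe_product, Set.mem_prod, Finset.mem_coe, Finset.mem_filter,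
      mem_flatTuples] at h ⊢
    obtain ⟨-, ⟨hLI, hx⟩, hy⟩ := h
    refine ⟨Fintype.linearIndependent_iff.2 fun a ha => ?_, fun i => by simp [hx, hbx]⟩
    have hlin : ∀ i, (u i).linear (y - x) = 0 := fun i => by
      rw [← vsub_eq_sub, AffineMap.linearMap_vsub, hx, hy, vsub_self]
    simp only [AffineMap.add_linear, AffineMap.smul_linear, smul_add, smul_smul,
      Finset.sum_add_distrib, ← Finset.sum_smul] at ha
    have hat : ∑ i, a i * t i = 0 := by
      simpa [hlin, hbv] using LinearMap.congr_fun ha (y - x)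
    rw [hat, zero_smul, add_zero] at ha
    exact Fintype.linearIndependent_iff.1 hLI a ha
  · simp only [Finset.coe_product, Set.mem_prod, Finset.mem_coe, Finset.mem_filter] at h h'
    have ht : t = t' := by
      ext i
      simpa [h.2.2, h'.2.2, hby] using DFunLike.congr_fun (congrFun heq i) y
    subst ht
    exact Prod.ext rfl (add_left_injective (fun i => t i • b) heq)

end Flats

section Moments

variable {K V : Type*} [Field K] [Fintype K] [DecidableEq K] [AddCommGroup V] [Module K V]
  [Fintype V]

lemma sum_card_filter_flatTuples (d : ℕ) (S : Finset V) :
    Fintype.card K ^ d * ∑ u ∈ flatTuples K V d, (S.filter fun x => ∀ i, u i x = 0).card =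
      S.card * (flatTuples K V d).card := by
  have hswap : ∑ u ∈ flatTuples K V d, (S.filter fun x => ∀ i, u i x = 0).card =
      ∑ x ∈ S, ((flatTuples K V d).filter fun u => ∀ i, u i x = 0).card := by
    simp only [Finset.card_filter]
    exact Finset.sum_comm
  rw [hswap, Finset.mul_sum,
    Finset.sum_congr rfl fun x _ => card_pow_mul_card_flatTuples_filter x, Finset.sum_const,
    smul_eq_mul]

lemma sum_card_filter_flatTuples_sq_le (d : ℕ) (S : Finset V) :
    Fintype.card K ^ (2 * d) *
        ∑ u ∈ flatTuples K V d, (S.filter fun x => ∀ i, u i x = 0).card ^ 2 ≤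
      (Fintype.card K ^ d * S.card + S.card ^ 2) * (flatTuples K V d).card := by
  classical
  set T := flatTuples K V d
  set Q := Fintype.card K ^ d
  have hpair : ∀ x y : V, Q ^ 2 * ((T.filter fun u => ∀ i, u i x = 0).filter
      fun u => ∀ i, u i y = 0).card ≤ ((if x = y then Q else 0) + 1) * T.card := fun x y => by
    rw [← card_pow_mul_card_flatTuples_filter x]
    split_ifs with hxy
    · subst hxy
      rw [Finset.filter_filter, sq, mul_assoc]
      simp only [and_self]
      exact Nat.mul_le_mul_right _ (Nat.le_succ Q)
    · rw [sq, mul_assoc, zero_add, one_mul]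
      exact Nat.mul_le_mul_left _ (card_pow_mul_card_flatTuples_filter_filter_le hxy)
  have hswap : ∑ u ∈ T, (S.filter fun x => ∀ i, u i x = 0).card ^ 2 =
      ∑ x ∈ S, ∑ y ∈ S, ((T.filter fun u => ∀ i, u i x = 0).filter
        fun u => ∀ i, u i y = 0).card := by
    simp only [Finset.card_filter, Finset.sum_filter, sq, Finset.sum_mul_sum]
    rw [Finset.sum_comm]
    refine Finset.sum_congr rfl fun x _ => Finset.sum_comm.trans ?_
    simp only [ite_mul, one_mul, zero_mul]
  rw [mul_comm 2 d, pow_mul, hswap, Finset.mul_sum]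
  calc ∑ x ∈ S, Q ^ 2 * ∑ y ∈ S, ((T.filter fun u => ∀ i, u i x = 0).filter
          fun u => ∀ i, u i y = 0).card
      ≤ ∑ x ∈ S, ∑ y ∈ S, ((if x = y then Q else 0) + 1) * T.card := by
        simp only [Finset.mul_sum]
        exact Finset.sum_le_sum fun x _ => Finset.sum_le_sum fun y _ => hpair x y
    _ = (Q * S.card + S.card ^ 2) * T.card := by
        simp only [← Finset.sum_mul, Finset.sum_add_distrib, Finset.sum_ite_eq, Finset.sum_ite_mem,
          Finset.inter_self, Finset.sum_const, smul_eq_mul, mul_one]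
        ring

lemma card_rejecting_mul_card_pow_le (d : ℕ) (f : V → K) :
    (rejecting d f).card * Fintype.card K ^ d ≤
      (Finset.univ.filter fun x => f x ≠ 0).card * (flatTuples K V d).card := by
  rw [← sum_card_filter_flatTuples, mul_comm]
  refine Nat.mul_le_mul_left _ ?_
  rw [rejecting, Finset.card_filter]
  refine Finset.sum_le_sum fun u _ => ?_
  split_ifs with hu
  · rw [dotProduct_flatInd] at hu
    obtain ⟨x, hx, hfx⟩ := Finset.exists_ne_zero_of_sum_ne_zero hu
    exact Finset.card_pos.2 ⟨x, Finset.mem_filter.2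
      ⟨Finset.mem_filter.2 ⟨Finset.mem_univ x, hfx⟩, (Finset.mem_filter.1 hx).2⟩⟩
  · exact Nat.zero_le _

lemma dotProduct_flatInd_ne_zero {d : ℕ} {f g : V → K}
    (hg : g ∈ polyDual K V ((Fintype.card K - 1) * d)) {u : Fin d → V →ᵃ[K] K}
    (hu : ((Finset.univ.filter fun x => f x ≠ g x).filter fun x => ∀ i, u i x = 0).card = 1) :
    f ⬝ᵥ flatInd u ≠ 0 := by
  obtain ⟨x, hx⟩ := Finset.card_eq_one.1 hu
  have hmem : f x ≠ g x ∧ ∀ i, u i x = 0 := by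
    simpa using (Finset.ext_iff.1 hx x).2 (Finset.mem_singleton_self x)
  have hfg : f ⬝ᵥ flatInd u = (f - g) ⬝ᵥ flatInd u := by
    rw [sub_dotProduct, hg _ (flatInd_mem_polyDegLE u), sub_zero]
  rw [hfg, dotProduct_flatInd, Finset.sum_eq_single x]
  · exact sub_ne_zero.2 hmem.1
  · intro y hy hyx
    by_contra hne
    refine hyx (Finset.mem_singleton.1 (hx ▸ ?_))
    simpa using ⟨sub_ne_zero.1 hne, (Finset.mem_filter.1 hy).2⟩
  · exact fun hxu => absurd (Finset.mem_filter.2 ⟨Finset.mem_univ x, hmem.2⟩) hxu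

-- Second moment: `2 c - c ^ 2 ≤ 1` when the number `c` of disagreements on a flat is `1`, in which
-- case the flat detects `f`, and `2 c - c ^ 2 ≤ 0` otherwise.
lemma card_flatTuples_mul_le_card_rejecting {d : ℕ} {f g : V → K}
    (hg : g ∈ polyDual K V ((Fintype.card K - 1) * d)) :
    ((flatTuples K V d).card : ℝ) * (hammingDist f g / (Fintype.card K : ℝ) ^ d -
      (hammingDist f g / (Fintype.card K : ℝ) ^ d) ^ 2) ≤ (rejecting d f).card := by
  set S : Finset V := Finset.univ.filter fun x => f x ≠ g x
  set T := flatTuples K V d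
  set Q : ℝ := (Fintype.card K : ℝ) ^ d
  have hQ : 0 < Q := pow_pos (Nat.cast_pos.2 Fintype.card_pos) d
  let c : (Fin d → V →ᵃ[K] K) → ℕ := fun u => (S.filter fun x => ∀ i, u i x = 0).card
  have hpt : ∀ u, 2 * (c u : ℝ) - (c u : ℝ) ^ 2 ≤ if f ⬝ᵥ flatInd u ≠ 0 then 1 else 0 := by
    intro u
    rcases Nat.lt_trichotomy (c u) 1 with h | h | h
    · rw [Nat.lt_one_iff.1 h]
      split_ifs <;> norm_num
    · rw [if_pos (dotProduct_flatInd_ne_zero hg h), h]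
      norm_num
    · have h2 : (2 : ℝ) ≤ c u := by exact_mod_cast h
      split_ifs <;> nlinarith
  have hfst : Q * ∑ u ∈ T, (c u : ℝ) = S.card * T.card := by
    have h := congrArg (Nat.cast (R := ℝ)) (sum_card_filter_flatTuples (K := K) d S)
    push_cast at h
    exact h
  have hsnd : Q ^ 2 * ∑ u ∈ T, (c u : ℝ) ^ 2 ≤ (Q * S.card + (S.card : ℝ) ^ 2) * T.card := by
    have h := sum_card_filter_flatTuples_sq_le (K := K) d S
    rw [mul_comm 2 d, pow_mul, ← Nat.cast_le (α := ℝ)] at h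
    push_cast at h
    exact h
  change T.card * (S.card / Q - (S.card / Q) ^ 2) ≤ _
  calc (T.card : ℝ) * (S.card / Q - (S.card / Q) ^ 2)
      = (2 * Q * (S.card * T.card) - (Q * S.card + (S.card : ℝ) ^ 2) * T.card) / Q ^ 2 := by
        field_simp
        ring
    _ ≤ (2 * Q * (Q * ∑ u ∈ T, (c u : ℝ)) - Q ^ 2 * ∑ u ∈ T, (c u : ℝ) ^ 2) / Q ^ 2 := by
        rw [hfst]
        gcongr
    _ = ∑ u ∈ T, (2 * (c u : ℝ) - (c u : ℝ) ^ 2) := by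
        rw [Finset.sum_sub_distrib, ← Finset.mul_sum]
        field_simp
    _ ≤ ∑ u ∈ T, if f ⬝ᵥ flatInd u ≠ 0 then 1 else 0 := Finset.sum_le_sum fun u _ => hpt u
    _ = (rejecting d f).card := by rw [Finset.sum_boole, rejecting]

end Moments

section Extend

variable {α β R : Type*} [Fintype α] [Fintype β] {m : α → β}

lemma extend_dotProduct [NonUnitalNonAssocSemiring R] (hm : Function.Injective m) (g : α → R)
    (φ : β → R) : Function.extend m g 0 ⬝ᵥ φ = g ⬝ᵥ (φ ∘ m) := by
  refine (Fintype.sum_of_injective m hm _ _ (fun x hx => ?_) fun y => ?_).symm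
  · rw [Function.extend_apply' _ _ _ hx, Pi.zero_apply, zero_mul]
  · rw [hm.extend_apply, Function.comp_apply]

lemma hammingDist_extend [Zero R] [DecidableEq R] (hm : Function.Injective m) (g h : α → R) :
    hammingDist (Function.extend m g 0) (Function.extend m h 0) = hammingDist g h := by
  simp only [hammingDist, Finset.card_filter]
  refine (Fintype.sum_of_injective m hm _ _ (fun x hx => ?_) fun y => ?_).symm
  · rw [Function.extend_apply' _ _ _ hx, Function.extend_apply' _ _ _ hx, if_neg (not_not.2 rfl)]
  · rw [hm.extend_apply, hm.extend_apply]

end Extend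

lemma linearIndependent_comp_iff_finCons {K E F : Type*} [Field K] [AddCommGroup E] [Module K E]
    [AddCommGroup F] [Module K F] {d : ℕ} {f : E →ₗ[K] F} {x : E} (hx : x ≠ 0)
    (hf : LinearMap.ker f = Submodule.span K {x}) (v : Fin d → E) :
    LinearIndependent K (fun i => f (v i)) ↔
      LinearIndependent K (Fin.cons x v : Fin (d + 1) → E) := by
  rw [linearIndependent_finCons, ← Submodule.disjoint_span_singleton' hx, ← hf]
  refine ⟨fun h => ⟨.of_comp f h, Submodule.range_ker_disjoint h⟩, fun ⟨h, hdisj⟩ => ?_⟩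
  exact (f.linearIndependent_iff_of_disjoint hdisj).2 h

lemma ker_dualMap_eq_span_singleton {K V V' : Type*} [Field K] [AddCommGroup V] [Module K V]
    [AddCommGroup V'] [Module K V'] {a : Module.Dual K V} {f : V' →ₗ[K] V}
    (hf : LinearMap.range f = LinearMap.ker a) :
    LinearMap.ker f.dualMap = Submodule.span K {a} := by
  rw [LinearMap.ker_dualMap_eq_dualAnnihilator_range, hf, ← a.range_dualMap_eq_dualAnnihilator_ker]
  ext v
  rw [LinearMap.mem_range, Submodule.mem_span_singleton]
  constructor
  · rintro ⟨φ, rfl⟩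
    refine ⟨φ 1, LinearMap.ext fun x => ?_⟩
    rw [LinearMap.smul_apply, smul_eq_mul, mul_comm, ← smul_eq_mul, ← map_smul, smul_eq_mul,
      mul_one, LinearMap.dualMap_apply]
  · rintro ⟨c, rfl⟩
    exact ⟨c • LinearMap.id, rfl⟩

section Restriction

variable {K V V' : Type*} [Field K] [AddCommGroup V] [Module K V] [AddCommGroup V'] [Module K V']
  {m : V' →ᵃ[K] V} {u : V →ᵃ[K] K}

lemma comp_affineMap_surjective (hm : Function.Injective m) :
    Function.Surjective fun w : V →ᵃ[K] K => w.comp m := fun w => by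
  obtain ⟨π, hπ⟩ := m.linear.exists_leftInverse_of_injective
    (LinearMap.ker_eq_bot.2 (m.linear_injective_iff.2 hm))
  refine ⟨w.comp (π.toAffineMap - AffineMap.const K V (π (m 0))), AffineMap.ext fun y => ?_⟩
  have hy : m y = m.linear y + m 0 := congrFun m.decomp y
  have hπy : π (m.linear y) = y := LinearMap.congr_fun hπ y
  simp [hy, hπy]

lemma range_linear_eq_ker (hmu : Set.range m = {x | u x = 0}) :
    LinearMap.range m.linear = LinearMap.ker u.linear := by
  have hm0 : u (m 0) = 0 := hmu.le ⟨0, rfl⟩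
  have hu : ∀ x, u (x + m 0) = u.linear x := fun x => by
    rw [← vadd_eq_add, u.map_vadd, hm0, vadd_eq_add, add_zero]
  have hlin : ∀ y, m.linear y + m 0 = m y := fun y => (congrFun m.decomp y).symm
  ext x
  rw [LinearMap.mem_ker, ← hu]
  refine ⟨?_, fun hx => ?_⟩
  · rintro ⟨y, rfl⟩
    rw [hlin]
    exact hmu.le ⟨y, rfl⟩
  · obtain ⟨y, hy⟩ := hmu.ge hx
    exact ⟨y, add_right_cancel ((hlin y).trans hy)⟩

lemma linearIndependent_finCons_linear_iff {d : ℕ} (hu : u.linear ≠ 0)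
    (hmu : Set.range m = {x | u x = 0}) (w : Fin d → V →ᵃ[K] K) :
    LinearIndependent K (fun i => ((Fin.cons u w : Fin (d + 1) → V →ᵃ[K] K) i).linear) ↔
      LinearIndependent K fun i => ((w i).comp m).linear := by
  have hcons : (fun i => ((Fin.cons u w : Fin (d + 1) → V →ᵃ[K] K) i).linear) =
      Fin.cons u.linear fun i => (w i).linear := by
    ext i : 1
    exact Fin.cases rfl (fun _ => rfl) i
  rw [hcons, ← linearIndependent_comp_iff_finCons hu
    (ker_dualMap_eq_span_singleton (range_linear_eq_ker hmu))]
  rfl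

lemma extend_mem_polyDual [Fintype V] [Fintype V'] {e : ℕ} {g : V' → K} (hm : Function.Injective m)
    (hg : g ∈ polyDual K V' e) : Function.extend m g 0 ∈ polyDual K V e := fun φ hφ => by
  rw [extend_dotProduct hm]
  exact hg _ (comp_mem_polyDegLE hφ m)

variable [Fintype K]

lemma mul_hyperplaneInd_eq_extend (hm : Function.Injective m)
    (hmu : Set.range m = {x | u x = 0}) (f : V → K) :
    f * hyperplaneInd u = Function.extend m (f ∘ m) 0 := by
  classical
  ext x
  rw [Pi.mul_apply, hyperplaneInd_apply]
  split_ifs with hx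
  · obtain ⟨y, rfl⟩ := hmu.ge hx
    rw [hm.extend_apply, mul_one, Function.comp_apply]
  · rw [Function.extend_apply' _ _ _ fun h => hx (hmu.le h), mul_zero, Pi.zero_apply]

lemma flatInd_comp {d : ℕ} (w : Fin d → V →ᵃ[K] K) :
    flatInd w ∘ m = flatInd fun i => (w i).comp m := by
  classical
  ext y
  rw [Function.comp_apply, flatInd_apply, flatInd_apply]
  rfl

variable [Fintype V] [Fintype V']

lemma finCons_mem_flatTuples {d : ℕ} (hu : u.linear ≠ 0) (hmu : Set.range m = {x | u x = 0})
    (w : Fin d → V →ᵃ[K] K) :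
    (Fin.cons u w : Fin (d + 1) → V →ᵃ[K] K) ∈ flatTuples K V (d + 1) ↔
      (fun i => (w i).comp m) ∈ flatTuples K V' d := by
  rw [mem_flatTuples, mem_flatTuples]
  exact linearIndependent_finCons_linear_iff hu hmu w

lemma finCons_mem_rejecting [DecidableEq K] {d : ℕ} (hu : u.linear ≠ 0)
    (hm : Function.Injective m) (hmu : Set.range m = {x | u x = 0}) (f : V → K)
    (w : Fin d → V →ᵃ[K] K) :
    (Fin.cons u w : Fin (d + 1) → V →ᵃ[K] K) ∈ rejecting (d + 1) f ↔
      (fun i => (w i).comp m) ∈ rejecting d (f ∘ m) := by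
  rw [rejecting, Finset.mem_filter, rejecting, Finset.mem_filter, finCons_mem_flatTuples hu hmu,
    flatInd_cons, ← mul_dotProduct_eq_dotProduct_mul, mul_hyperplaneInd_eq_extend hm hmu,
    extend_dotProduct hm, flatInd_comp]

lemma card_pow_mul_card_eq_of_comp_mem_iff {d : ℕ} (hm : Function.Injective m)
    {R : Finset (Fin d → V →ᵃ[K] K)} {S : Finset (Fin d → V' →ᵃ[K] K)}
    (hRS : ∀ w, w ∈ R ↔ (fun i => (w i).comp m) ∈ S) :
    Fintype.card (V' →ᵃ[K] K) ^ d * R.card = Fintype.card (V →ᵃ[K] K) ^ d * S.card := by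
  classical
  let ρ : (Fin d → V →ᵃ[K] K) →+ (Fin d → V' →ᵃ[K] K) :=
    AddMonoidHom.mk' (fun w i => (w i).comp m) fun _ _ => rfl
  have hρ : Function.Surjective ρ := fun w =>
    ⟨fun i => (comp_affineMap_surjective hm (w i)).choose,
      funext fun i => (comp_affineMap_surjective hm (w i)).choose_spec⟩
  have h := card_nsmul_sum_comp_of_surjective ρ hρ fun w => if w ∈ S then 1 else 0
  have hR : (Finset.univ.filter fun w => ρ w ∈ S) = R :=
    Finset.ext fun w => (Finset.mem_filter_univ w).trans (hRS w).symm
  rw [← Finset.card_filter, ← Finset.card_filter, Finset.filter_univ_mem, hR, Fintype.card_fun,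
    Fintype.card_fun, Fintype.card_fin, smul_eq_mul, smul_eq_mul] at h
  exact h

end Restriction

section ConsFiber

variable {α : Type*} [Fintype α] {d : ℕ}

/-- The tuples which, with `a` prepended, belong to `S`. -/
noncomputable def consFiber (S : Finset (Fin (d + 1) → α)) (a : α) : Finset (Fin d → α) :=
  Finset.univ.filter fun w => Fin.cons a w ∈ S

lemma mem_consFiber {S : Finset (Fin (d + 1) → α)} {a : α} {w : Fin d → α} :
    w ∈ consFiber S a ↔ Fin.cons a w ∈ S :=
  Finset.mem_filter_univ w

lemma sum_card_consFiber (S : Finset (Fin (d + 1) → α)) :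
    ∑ a, (consFiber S a).card = S.card := by
  have h := (Fin.consEquiv fun _ : Fin (d + 1) => α).sum_comp fun u => if u ∈ S then 1 else 0
  rw [Fintype.sum_prod_type, ← Finset.card_filter, Finset.filter_univ_mem] at h
  simp only [consFiber, Finset.card_filter]
  exact h

end ConsFiber

section Averaging

variable {K V V' : Type*} [Field K] [AddCommGroup V] [Module K V] [AddCommGroup V'] [Module K V']

/-- A parametrization of the hyperplane `u = 0` by the kernel of the linear part of `u`. It is
meaningful only for nonconstant `u`; the base point is then a chosen zero of `u`. -/
noncomputable def hyperplaneParam (u : V →ᵃ[K] K) : LinearMap.ker u.linear →ᵃ[K] V :=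
  (LinearMap.ker u.linear).subtype.toAffineMap + AffineMap.const K _ (Function.invFun u 0)

lemma hyperplaneParam_injective (u : V →ᵃ[K] K) : Function.Injective (hyperplaneParam u) :=
  fun _ _ h => Subtype.ext (add_right_cancel h)

lemma range_hyperplaneParam {u : V →ᵃ[K] K} (hu : u.linear ≠ 0) :
    Set.range (hyperplaneParam u) = {x | u x = 0} := by
  have hzero : u (Function.invFun u 0) = 0 :=
    Function.invFun_eq (u.linear_surjective_iff.1 (LinearMap.surjective hu) 0)
  have hlin : ∀ x, u.linear (x - Function.invFun u 0) = u x := fun x => by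
    rw [← vsub_eq_sub, u.linearMap_vsub, hzero, vsub_eq_sub, sub_zero]
  refine Set.Subset.antisymm ?_ fun x hx => ?_
  · rintro _ ⟨y, rfl⟩
    rw [Set.mem_ofPred_eq, ← hlin]
    simp [hyperplaneParam]
  · exact ⟨⟨x - Function.invFun u 0, (hlin x).trans hx⟩, by simp [hyperplaneParam]⟩

variable [Fintype K] [Fintype V] [Fintype V']

lemma comp_linearEquiv_mem_flatTuples {d : ℕ} (e : V' ≃ₗ[K] V) {u : Fin d → V →ᵃ[K] K}
    (hu : u ∈ flatTuples K V d) :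
    (fun i => (u i).comp e.toLinearMap.toAffineMap) ∈ flatTuples K V' d :=
  mem_flatTuples.2 ((mem_flatTuples.1 hu).map' e.dualMap.toLinearMap (LinearEquiv.ker _))

lemma card_flatTuples_congr (e : V ≃ₗ[K] V') (d : ℕ) :
    (flatTuples K V d).card = (flatTuples K V' d).card := by
  refine Finset.card_nbij' (fun u i => (u i).comp e.symm.toLinearMap.toAffineMap)
    (fun u i => (u i).comp e.toLinearMap.toAffineMap)
    (fun u hu => comp_linearEquiv_mem_flatTuples e.symm hu)
    (fun u hu => comp_linearEquiv_mem_flatTuples e hu) (fun u _ => ?_) fun u _ => ?_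
  all_goals
    ext
    simp

lemma card_pow_mul_card_consFiber_flatTuples (d : ℕ) {u : V →ᵃ[K] K}
    (hu : u.linear ≠ 0) :
    Fintype.card (LinearMap.ker u.linear →ᵃ[K] K) ^ d *
        (consFiber (flatTuples K V (d + 1)) u).card =
      Fintype.card (V →ᵃ[K] K) ^ d * (flatTuples K (LinearMap.ker u.linear) d).card :=
  card_pow_mul_card_eq_of_comp_mem_iff (hyperplaneParam_injective u) fun w =>
    mem_consFiber.trans (finCons_mem_flatTuples hu (range_hyperplaneParam hu) w)

lemma card_pow_mul_card_consFiber_rejecting [DecidableEq K] (d : ℕ) (f : V → K)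
    {u : V →ᵃ[K] K} (hu : u.linear ≠ 0) :
    Fintype.card (LinearMap.ker u.linear →ᵃ[K] K) ^ d *
        (consFiber (rejecting (d + 1) f) u).card =
      Fintype.card (V →ᵃ[K] K) ^ d * (rejecting d (f ∘ hyperplaneParam u)).card :=
  card_pow_mul_card_eq_of_comp_mem_iff (hyperplaneParam_injective u) fun w => mem_consFiber.trans
    (finCons_mem_rejecting hu (hyperplaneParam_injective u) (range_hyperplaneParam hu) f w)

lemma exists_card_consFiber_flatTuples_eq (d : ℕ) :
    ∃ t, ∀ u : V →ᵃ[K] K, u.linear ≠ 0 → (consFiber (flatTuples K V (d + 1)) u).card = t := by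
  by_cases hex : ∃ u : V →ᵃ[K] K, u.linear ≠ 0
  swap
  · exact ⟨0, fun u hu => absurd ⟨u, hu⟩ hex⟩
  obtain ⟨u₀, hu₀⟩ := hex
  refine ⟨(consFiber (flatTuples K V (d + 1)) u₀).card,
    fun u hu => Nat.eq_of_mul_eq_mul_left (pow_pos Fintype.card_pos d)
    ((card_pow_mul_card_consFiber_flatTuples d hu).trans ?_)⟩
  have : FiniteDimensional K V := Module.Finite.of_finite
  have e : LinearMap.ker u.linear ≃ₗ[K] LinearMap.ker u₀.linear := by
    refine LinearEquiv.ofFinrankEq _ _ (Nat.add_right_cancel (m := 1) ?_)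
    rw [Module.Dual.finrank_ker_add_one_of_ne_zero hu,
      Module.Dual.finrank_ker_add_one_of_ne_zero hu₀]
  rw [card_flatTuples_congr e, ← card_pow_mul_card_consFiber_flatTuples d hu₀,
    card_affineMap, card_affineMap, Fintype.card_congr e.toEquiv]

lemma mul_card_consFiber_flatTuples_le [DecidableEq K] {d : ℕ} {f : V → K} {u : V →ᵃ[K] K}
    (hu : u.linear ≠ 0) {κ : ℝ} (hrej : κ * (flatTuples K (LinearMap.ker u.linear) d).card ≤
      (rejecting d (f ∘ hyperplaneParam u)).card) :
    κ * (consFiber (flatTuples K V (d + 1)) u).card ≤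
      (consFiber (rejecting (d + 1) f) u).card := by
  have hflat := card_pow_mul_card_consFiber_flatTuples d hu
  have hrejF := card_pow_mul_card_consFiber_rejecting d f hu
  set A := Fintype.card (LinearMap.ker u.linear →ᵃ[K] K) ^ d
  set B := Fintype.card (V →ᵃ[K] K) ^ d
  have hA : (0 : ℝ) < A := Nat.cast_pos.2 (pow_pos Fintype.card_pos d)
  refine le_of_mul_le_mul_left ?_ hA
  calc (A : ℝ) * (κ * (consFiber (flatTuples K V (d + 1)) u).card)
      = B * (κ * (flatTuples K (LinearMap.ker u.linear) d).card) := by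
        rw [mul_left_comm, mul_left_comm (B : ℝ)]
        exact congrArg (κ * ·) (by exact_mod_cast hflat)
    _ ≤ B * (rejecting d (f ∘ hyperplaneParam u)).card :=
        mul_le_mul_of_nonneg_left hrej (Nat.cast_nonneg B)
    _ = A * (consFiber (rejecting (d + 1) f) u).card := by exact_mod_cast hrejF.symm

lemma mul_card_flatTuples_succ_le_card_rejecting [DecidableEq K] {d : ℕ} {f : V → K}
    {H : Finset (V →ᵃ[K] K)} {c κ : ℝ} (hκ : 0 ≤ κ) (hH : ∀ u ∈ H, u.linear ≠ 0)
    (hcard : c * (Finset.univ.filter fun u : V →ᵃ[K] K => u.linear ≠ 0).card ≤ H.card)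
    (hrej : ∀ u ∈ H, κ * (flatTuples K (LinearMap.ker u.linear) d).card ≤
      (rejecting d (f ∘ hyperplaneParam u)).card) :
    c * κ * (flatTuples K V (d + 1)).card ≤ (rejecting (d + 1) f).card := by
  obtain ⟨t, ht⟩ := exists_card_consFiber_flatTuples_eq (K := K) (V := V) d
  have htotal : (flatTuples K V (d + 1)).card =
      (Finset.univ.filter fun u : V →ᵃ[K] K => u.linear ≠ 0).card * t := by
    rw [← sum_card_consFiber, Finset.card_filter, Finset.sum_mul]
    refine Finset.sum_congr rfl fun u _ => ?_
    split_ifs with hu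
    · rw [ht u hu, one_mul]
    · rw [zero_mul, Finset.card_eq_zero, Finset.eq_empty_iff_forall_notMem]
      exact fun w hw => (mem_flatTuples.1 (mem_consFiber.1 hw)).ne_zero 0 (not_not.1 hu)
  have hcons : ∀ u ∈ H, κ * t ≤ (consFiber (rejecting (d + 1) f) u).card := fun u hu => by
    rw [← ht u (hH u hu)]
    exact mul_card_consFiber_flatTuples_le (hH u hu) (hrej u hu)
  calc c * κ * (flatTuples K V (d + 1)).card
      = c * (Finset.univ.filter fun u : V →ᵃ[K] K => u.linear ≠ 0).card * (κ * t) := by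
        rw [htotal, Nat.cast_mul]
        ring
    _ ≤ H.card * (κ * t) :=
        mul_le_mul_of_nonneg_right hcard (mul_nonneg hκ (Nat.cast_nonneg t))
    _ ≤ ∑ u ∈ H, ((consFiber (rejecting (d + 1) f) u).card : ℝ) := by
        rw [← nsmul_eq_mul]
        exact Finset.card_nsmul_le_sum _ _ _ hcons
    _ ≤ (rejecting (d + 1) f).card := by
        rw [← sum_card_consFiber (rejecting (d + 1) f), Nat.cast_sum]
        exact Finset.sum_le_univ_sum_of_nonneg fun u => Nat.cast_nonneg _

end Averaging

section Nonconstant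

variable {K V : Type*} [Field K] [Fintype K] [AddCommGroup V] [Module K V]

lemma sum_hyperplaneInd_add_const (u : V →ᵃ[K] K) :
    ∑ c, hyperplaneInd (u + AffineMap.const K V c) = 1 := by
  classical
  ext x
  simp only [Finset.sum_apply, hyperplaneInd_apply, AffineMap.coe_add, Pi.add_apply,
    AffineMap.const_apply, add_eq_zero_iff_neg_eq, Finset.sum_ite_eq, Finset.mem_univ, if_true,
    Pi.one_apply]

variable [Fintype V]

lemma mem_polyDual_of_forall_mul_hyperplaneInd_mem {e : ℕ} {f : V → K} {u₀ : V →ᵃ[K] K}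
    (hu₀ : u₀.linear ≠ 0)
    (h : ∀ u : V →ᵃ[K] K, u.linear ≠ 0 → f * hyperplaneInd u ∈ polyDual K V e) :
    f ∈ polyDual K V e := by
  rw [← mul_one f, ← sum_hyperplaneInd_add_const u₀, Finset.mul_sum]
  exact Submodule.sum_mem _ fun c _ => h _ (by simpa using hu₀)

variable [DecidableEq K]

lemma card_filter_linear_ne_zero_add :
    (Finset.univ.filter fun u : V →ᵃ[K] K => u.linear ≠ 0).card + Fintype.card K =
      Fintype.card (V →ᵃ[K] K) := by
  have hconst : (Finset.univ.filter fun u : V →ᵃ[K] K => ¬u.linear ≠ 0) =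
      Finset.univ.image (AffineMap.const K V) := by
    ext u
    simp [AffineMap.linear_eq_zero_iff_exists_const, eq_comm]
  have hcard : (Finset.univ.image (AffineMap.const K V : K → V →ᵃ[K] K)).card = Fintype.card K :=
    Finset.card_image_of_injective _ fun a b h => DFunLike.congr_fun h 0
  rw [← hcard, ← hconst, Finset.card_filter_add_card_filter_not, Finset.card_univ]

lemma rejecting_zero_of_notMem_polyDual {f : V → K} (hf : f ∉ polyDual K V 0) :
    rejecting 0 f = flatTuples K V 0 := by
  refine Finset.filter_true_of_mem fun u _ hu => hf fun φ hφ => ?_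
  rw [polyDegLE, pow_zero] at hφ
  obtain ⟨c, rfl⟩ := Submodule.mem_one.1 hφ
  have hone : flatInd u = 1 := Fin.prod_univ_zero _
  rw [hone] at hu
  rw [Algebra.algebraMap_eq_smul_one, dotProduct_smul, hu, smul_zero]

end Nonconstant

lemma mem_polyDual_succ_of_forall_mul_mem {K V : Type*} [CommRing K] [AddCommGroup V] [Module K V]
    [Fintype V] {e : ℕ} {f : V → K} (h : ∀ u : V →ᵃ[K] K, f * u ∈ polyDual K V e) :
    f ∈ polyDual K V (e + 1) := fun _ hφ => by
  refine polyDegLE_succ_induction (p := fun φ => f ⬝ᵥ φ = 0) (fun ψ hψ u => ?_)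
    (fun φ ψ hφ hψ => by rw [dotProduct_add, hφ, hψ, add_zero]) hφ
  rw [mul_comm, ← mul_dotProduct_eq_dotProduct_mul]
  exact h u ψ hψ

section Bad

variable {V : Type*} [AddCommGroup V] [Module F3 V]

lemma hyperplaneInd_eq_one_sub_sq (u : V →ᵃ[F3] F3) : hyperplaneInd u = 1 - ⇑u ^ 2 := by
  rw [hyperplaneInd, ZMod.card]

variable [Fintype V]

lemma mul_sq_mem_polyDual {e : ℕ} {f : V → F3} (hf : f ∈ polyDual F3 V e)
    (h : ∀ u : V →ᵃ[F3] F3, u.linear ≠ 0 → f * hyperplaneInd u ∈ polyDual F3 V e)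
    (u : V →ᵃ[F3] F3) : f * u ^ 2 ∈ polyDual F3 V e := by
  by_cases hu : u.linear = 0
  · obtain ⟨c, rfl⟩ := (AffineMap.linear_eq_zero_iff_exists_const u).1 hu
    have hc : f * ⇑(AffineMap.const F3 V c) ^ 2 = c ^ 2 • f :=
      funext fun x => mul_comm (f x) (c ^ 2)
    exact hc ▸ Submodule.smul_mem _ _ hf
  · have hsub : f * ⇑u ^ 2 = f - f * hyperplaneInd u := by
      rw [hyperplaneInd_eq_one_sub_sq, mul_sub, mul_one, sub_sub_cancel]
    exact hsub ▸ Submodule.sub_mem _ hf (h u hu)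

-- Polarization: products of two affine forms are combinations of squares.
lemma mem_polyDual_add_two_of_forall_mul_hyperplaneInd_mem {e : ℕ} {f : V → F3}
    {u₀ : V →ᵃ[F3] F3} (hu₀ : u₀.linear ≠ 0)
    (h : ∀ u : V →ᵃ[F3] F3, u.linear ≠ 0 → f * hyperplaneInd u ∈ polyDual F3 V e) :
    f ∈ polyDual F3 V (e + 2) := by
  have hsq := mul_sq_mem_polyDual (mem_polyDual_of_forall_mul_hyperplaneInd_mem hu₀ h) h
  refine mem_polyDual_succ_of_forall_mul_mem fun u =>
    mem_polyDual_succ_of_forall_mul_mem fun w => ?_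
  have hpol : f * u * w = (2 : F3) • (f * ⇑(u + w) ^ 2 - f * u ^ 2 - f * w ^ 2) := by
    ext x
    simp only [Pi.smul_apply, Pi.sub_apply, Pi.mul_apply, Pi.pow_apply, AffineMap.coe_add,
      Pi.add_apply, smul_eq_mul]
    linear_combination -(f x * u x * w x) * (by decide : (3 : F3) = 0)
  rw [hpol]
  exact Submodule.smul_mem _ _ (Submodule.sub_mem _ (Submodule.sub_mem _ (hsq _) (hsq u)) (hsq w))

-- `u ↦ u.linear y * ⟨f * hyperplaneInd u, φ⟩` is a cubic function of `u` which vanishes unless `u`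
-- has both properties.
lemma card_affineMap_le_eight_mul_card_filter_notMem_polyDual {e : ℕ} {f : V → F3}
    {u₀ : V →ᵃ[F3] F3} (hu₀ : u₀.linear ≠ 0) (hf : f ∉ polyDual F3 V (e + 2)) :
    Fintype.card (V →ᵃ[F3] F3) ≤ 8 * (Finset.univ.filter fun u : V →ᵃ[F3] F3 =>
      u.linear ≠ 0 ∧ f * hyperplaneInd u ∉ polyDual F3 V e).card := by
  obtain ⟨u₁, hu₁, hfu₁⟩ : ∃ u : V →ᵃ[F3] F3,
      u.linear ≠ 0 ∧ f * hyperplaneInd u ∉ polyDual F3 V e := by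
    by_contra! hall
    exact hf (mem_polyDual_add_two_of_forall_mul_hyperplaneInd_mem hu₀ hall)
  obtain ⟨φ, hφ, hfφ⟩ : ∃ φ ∈ polyDegLE F3 V e, (f * hyperplaneInd u₁) ⬝ᵥ φ ≠ 0 := by
    by_contra! hall
    exact hfu₁ hall
  obtain ⟨y, hy⟩ := DFunLike.ne_iff.1 hu₁
  let F : (V →ᵃ[F3] F3) → F3 := fun u => u.linear y * ((f * hyperplaneInd u) ⬝ᵥ φ)
  have hcubic : IsFwdDiffDegLE 3 F := fun h₁ h₂ h₃ h₄ => by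
    ext u
    simp only [F, fwdDiff, dotProduct, Finset.mul_sum, ← Finset.sum_sub_distrib]
    refine Finset.sum_eq_zero fun x _ => ?_
    simp only [hyperplaneInd_eq_one_sub_sq, Pi.mul_apply, Pi.sub_apply, Pi.one_apply, Pi.pow_apply,
      AffineMap.coe_add, Pi.add_apply, AffineMap.add_linear, LinearMap.add_apply]
    ring
  have hF : F ≠ 0 := Function.ne_iff.2 ⟨u₁, mul_ne_zero hy hfφ⟩
  refine (card_le_two_pow_mul_card_filter_ne_zero hF hcubic).trans
    (Nat.mul_le_mul_left 8 (Finset.card_le_card fun u hu => ?_))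
  rw [Finset.mem_filter_univ] at hu ⊢
  exact ⟨fun hlin => hu (by simp [F, hlin]), fun hmem => hu (by simp [F, hmem φ hφ])⟩

lemma two_mul_card_affineMap_le {u : V →ᵃ[F3] F3} (hu : u.linear ≠ 0) :
    2 * Fintype.card (V →ᵃ[F3] F3) ≤
      3 * (Finset.univ.filter fun u : V →ᵃ[F3] F3 => u.linear ≠ 0).card := by
  have hcard := card_affineMap (K := F3) (V := V)
  have hadd := card_filter_linear_ne_zero_add (K := F3) (V := V)
  have hV := Fintype.card_le_of_surjective u (u.linear_surjective_iff.1 (LinearMap.surjective hu))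
  rw [ZMod.card] at hcard hadd hV
  omega

lemma comp_hyperplaneParam_notMem_polyDual {e : ℕ} {f : V → F3} {u : V →ᵃ[F3] F3}
    (hu : u.linear ≠ 0) (hf : f * hyperplaneInd u ∉ polyDual F3 V e) :
    f ∘ hyperplaneParam u ∉ polyDual F3 (LinearMap.ker u.linear) e := fun h => hf <| by
  rw [mul_hyperplaneInd_eq_extend (hyperplaneParam_injective u) (range_hyperplaneParam hu)]
  exact extend_mem_polyDual (hyperplaneParam_injective u) h

end Bad

lemma eighth_pow_mul_card_flatTuples_le_card_rejecting {V : Type u} [AddCommGroup V] [Module F3 V]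
    [Fintype V] {d : ℕ} {f : V → F3} (hf : f ∉ polyDual F3 V (2 * d)) :
    (1 / 8 : ℝ) ^ d * (flatTuples F3 V d).card ≤ (rejecting d f).card := by
  induction d generalizing V with
  | zero => rw [pow_zero, one_mul, rejecting_zero_of_notMem_polyDual hf]
  | succ d ih =>
    set M := Finset.univ.filter fun u : V →ᵃ[F3] F3 => u.linear ≠ 0
    set B := Finset.univ.filter fun u : V →ᵃ[F3] F3 =>
      u.linear ≠ 0 ∧ f * hyperplaneInd u ∉ polyDual F3 V (2 * d)
    have hMB : M.card ≤ 8 * B.card := by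
      rcases M.eq_empty_or_nonempty with hM | ⟨u₀, hu₀⟩
      · rw [hM, Finset.card_empty]
        exact Nat.zero_le _
      · exact M.card_le_univ.trans (card_affineMap_le_eight_mul_card_filter_notMem_polyDual
          ((Finset.mem_filter_univ u₀).1 hu₀) hf)
    rw [pow_succ']
    refine mul_card_flatTuples_succ_le_card_rejecting (H := B) (by positivity)
      (fun u hu => ((Finset.mem_filter_univ u).1 hu).1) ?_ fun u hu => ?_
    · rw [one_div, inv_mul_le_iff₀ (by norm_num)]
      exact_mod_cast hMB
    · obtain ⟨hlin, hmem⟩ := (Finset.mem_filter_univ u).1 hu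
      exact ih (comp_hyperplaneParam_notMem_polyDual hlin hmem)

/-- The detection rate guaranteed for functions far from the dual code: `26` steps of the crude
bound `1 / 8` per dimension reach the dimension from which on the induction loses only a factor
`1 - (2 / 3) ^ d / 6` per step, and the factor `1 / 2` makes room for the product of these. -/
noncomputable def detectionRate : ℝ := (1 / 8) ^ 26 / 2

lemma detectionRate_pos : 0 < detectionRate := by
  unfold detectionRate
  positivity

lemma detectionRate_le : detectionRate ≤ 1 / 48 := by
  norm_num [detectionRate]

section Detection

variable {V : Type u} [AddCommGroup V] [Module F3 V] [Fintype V] {d : ℕ} {f : V → F3}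

lemma detectionRate_mul_le_of_le (hd : d ≤ 26) (hf : f ∉ polyDual F3 V (2 * d)) :
    detectionRate * (1 + (2 / 3) ^ d) * (flatTuples F3 V d).card ≤ (rejecting d f).card := by
  refine le_trans (mul_le_mul_of_nonneg_right ?_ (Nat.cast_nonneg _))
    (eighth_pow_mul_card_flatTuples_le_card_rejecting hf)
  have hpow : (2 / 3 : ℝ) ^ d ≤ 1 := pow_le_one₀ (by norm_num) (by norm_num)
  calc detectionRate * (1 + (2 / 3) ^ d) ≤ detectionRate * 2 :=
        mul_le_mul_of_nonneg_left (by linarith) detectionRate_pos.le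
    _ = (1 / 8) ^ 26 := div_mul_cancel₀ _ two_ne_zero
    _ ≤ (1 / 8) ^ d := pow_le_pow_of_le_one (by norm_num) (by norm_num) hd

lemma detectionRate_mul_le_of_hammingDist_le {g : V → F3} (hg : g ∈ polyDual F3 V (2 * d))
    (hlo : 3 ^ d ≤ 12 * hammingDist f g) (hhi : 2 * hammingDist f g ≤ 3 ^ d) :
    detectionRate * (1 + (2 / 3) ^ d) * (flatTuples F3 V d).card ≤ (rejecting d f).card := by
  have hmoment := card_flatTuples_mul_le_card_rejecting (K := F3) (d := d) (f := f) (g := g)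
    (by rw [ZMod.card]; exact hg)
  rw [ZMod.card, Nat.cast_ofNat] at hmoment
  refine le_trans ?_ hmoment
  rw [mul_comm]
  refine mul_le_mul_of_nonneg_left ?_ (Nat.cast_nonneg _)
  set s : ℝ := hammingDist f g / 3 ^ d
  have hs₀ : 1 / 12 ≤ s := by
    have h : (3 : ℝ) ^ d ≤ 12 * hammingDist f g := by exact_mod_cast hlo
    rw [le_div_iff₀ (by positivity)]
    linarith
  have hs₁ : s ≤ 1 / 2 := by
    have h : 2 * (hammingDist f g : ℝ) ≤ 3 ^ d := by exact_mod_cast hhi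
    rw [div_le_iff₀ (by positivity)]
    linarith
  have hpow : (2 / 3 : ℝ) ^ d ≤ 1 := pow_le_one₀ (by norm_num) (by norm_num)
  calc detectionRate * (1 + (2 / 3) ^ d) ≤ 1 / 48 * 2 :=
        mul_le_mul detectionRate_le (by linarith) (by positivity) (by norm_num)
    _ ≤ s - s ^ 2 := by nlinarith

variable (d f) in
/-- The nonconstant forms `u` such that the restriction of `f` to the hyperplane `u = 0` is within
distance `3 ^ d / 12` of the dual code. -/
noncomputable def nearHyperplanes : Finset (V →ᵃ[F3] F3) :=
  Finset.univ.filter fun u => u.linear ≠ 0 ∧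
    ∃ g ∈ polyDual F3 (LinearMap.ker u.linear) (2 * d),
      12 * hammingDist (f ∘ hyperplaneParam u) g < 3 ^ d

lemma exists_extend_of_mem_nearHyperplanes {u : V →ᵃ[F3] F3} (hu : u ∈ nearHyperplanes d f) :
    ∃ g ∈ polyDual F3 V (2 * d), (∀ x, u x ≠ 0 → g x = 0) ∧
      12 * hammingDist (f * hyperplaneInd u) g ≤ 3 ^ d := by
  obtain ⟨hlin, g, hg, hdist⟩ := (Finset.mem_filter_univ u).1 hu
  have hinj := hyperplaneParam_injective u
  have hrange := range_hyperplaneParam hlin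
  refine ⟨Function.extend (hyperplaneParam u) g 0, extend_mem_polyDual hinj hg, fun x hx =>
    Function.extend_apply' _ _ _ fun h => hx (hrange.le h), ?_⟩
  rw [mul_hyperplaneInd_eq_extend hinj hrange, hammingDist_extend hinj]
  exact hdist.le

lemma card_nearHyperplanes_lt (hd : 26 ≤ d)
    (hf : ∀ g ∈ polyDual F3 V (2 * (d + 1)), 3 ^ (d + 1) < 2 * hammingDist f g) :
    ((nearHyperplanes d f).card : ℝ) < (2 / 3) ^ d / 9 * Fintype.card (V →ᵃ[F3] F3) := by
  by_contra! hlarge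
  obtain ⟨e, rfl⟩ : ∃ e, d = e + 1 := ⟨d - 1, by omega⟩
  have hpow : (2 / 3 : ℝ) ^ (e + 1) ≤ 1 := pow_le_one₀ (by norm_num) (by norm_num)
  have hη : 20 ≤ ((2 / 3 : ℝ) ^ (e + 1) / 9) ^ 2 * 3 ^ (e + 1) := by
    calc (20 : ℝ) ≤ (4 / 3) ^ 26 / 81 := by norm_num
      _ ≤ (4 / 3) ^ (e + 1) / 81 := by
          gcongr
          norm_num
      _ = ((2 / 3 : ℝ) ^ (e + 1) / 9) ^ 2 * 3 ^ (e + 1) := by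
          rw [show (4 / 3 : ℝ) = (2 / 3) ^ 2 * 3 by norm_num, mul_pow, ← pow_mul, pow_mul']
          ring
  choose! g hg hsupp hdist using fun u (hu : u ∈ nearHyperplanes (e + 1) f) =>
    exists_extend_of_mem_nearHyperplanes hu
  obtain ⟨Q, hQ, hfQ⟩ := exists_mem_polyDual_hammingDist_le_of_hyperplanes hsupp hg hdist
    (by positivity) (by linarith) hlarge hη
  exact absurd hfQ (hf Q hQ).not_ge

lemma mul_card_le_card_sdiff_nearHyperplanes (hd : 26 ≤ d)
    (hf : ∀ g ∈ polyDual F3 V (2 * (d + 1)), 3 ^ (d + 1) < 2 * hammingDist f g) :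
    (1 - (2 / 3 : ℝ) ^ d / 6) * (Finset.univ.filter fun u : V →ᵃ[F3] F3 => u.linear ≠ 0).card ≤
      ((Finset.univ.filter fun u : V →ᵃ[F3] F3 => u.linear ≠ 0) \ nearHyperplanes d f).card := by
  set M := Finset.univ.filter fun u : V →ᵃ[F3] F3 => u.linear ≠ 0
  rcases M.eq_empty_or_nonempty with hM | ⟨u₀, hu₀⟩
  · rw [hM, Finset.card_empty, Nat.cast_zero, mul_zero]
    exact Nat.cast_nonneg _
  have hnear := card_nearHyperplanes_lt hd hf
  have hnonconst : 2 * (Fintype.card (V →ᵃ[F3] F3) : ℝ) ≤ 3 * M.card := by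
    exact_mod_cast two_mul_card_affineMap_le ((Finset.mem_filter_univ u₀).1 hu₀)
  have hsdiff : (M.card : ℝ) - (nearHyperplanes d f).card ≤ (M \ nearHyperplanes d f).card := by
    have h := Finset.le_card_sdiff (nearHyperplanes d f) M
    rw [tsub_le_iff_right] at h
    rw [sub_le_iff_le_add]
    exact_mod_cast h
  have hpow : (0 : ℝ) < (2 / 3) ^ d := by positivity
  nlinarith

end Detection

lemma detectionRate_mul_card_flatTuples_le {V : Type u} [AddCommGroup V] [Module F3 V] [Fintype V]
    {d : ℕ} {f : V → F3} (hf : ∀ g ∈ polyDual F3 V (2 * d), 3 ^ d ≤ 12 * hammingDist f g) :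
    detectionRate * (1 + (2 / 3) ^ d) * (flatTuples F3 V d).card ≤ (rejecting d f).card := by
  induction d generalizing V with
  | zero => exact detectionRate_mul_le_of_le (Nat.zero_le _) fun h => by simpa using hf f h
  | succ d ih =>
    rcases le_or_gt (d + 1) 26 with hd | hd
    · exact detectionRate_mul_le_of_le hd fun h => by simpa using hf f h
    by_cases hclose : ∃ g ∈ polyDual F3 V (2 * (d + 1)), 2 * hammingDist f g ≤ 3 ^ (d + 1)
    · obtain ⟨g, hg, hfg⟩ := hclose
      exact detectionRate_mul_le_of_hammingDist_le hg (hf g hg) hfg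
    push Not at hclose
    set q : ℝ := (2 / 3) ^ d
    have hq₀ : 0 < q := by positivity
    have hq₁ : q ≤ 1 := pow_le_one₀ (by norm_num) (by norm_num)
    have hκ : 0 ≤ detectionRate * (1 + q) := mul_nonneg detectionRate_pos.le (by linarith)
    refine le_trans (mul_le_mul_of_nonneg_right ?_ (Nat.cast_nonneg _))
      (mul_card_flatTuples_succ_le_card_rejecting hκ (fun u hu => ?_)
        (mul_card_le_card_sdiff_nearHyperplanes (Nat.le_of_lt_succ hd) hclose) fun u hu => ih ?_)
    · calc detectionRate * (1 + (2 / 3) ^ (d + 1))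
          = detectionRate * (1 + 2 / 3 * q) := by rw [pow_succ']
        _ ≤ detectionRate * ((1 - q / 6) * (1 + q)) :=
            mul_le_mul_of_nonneg_left (by nlinarith) detectionRate_pos.le
        _ = (1 - q / 6) * (detectionRate * (1 + q)) := mul_left_comm _ _ _
    · exact (Finset.mem_filter_univ u).1 (Finset.mem_sdiff.1 hu).1
    · obtain ⟨hM, hnear⟩ := Finset.mem_sdiff.1 hu
      intro g hg
      by_contra! hlt
      exact hnear ((Finset.mem_filter_univ u).2 ⟨(Finset.mem_filter_univ u).1 hM, g, hg, hlt⟩)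

section PolynomialDegree

variable {K : Type*} [Field K] [Fintype K]

lemma sum_pow_card_sub_one : ∑ x : K, x ^ (Fintype.card K - 1) = -1 := by
  classical
  have hq : Fintype.card K - 1 ≠ 0 := Nat.sub_ne_zero_of_lt Fintype.one_lt_card
  have h (x : K) : x ^ (Fintype.card K - 1) = 1 - if x = 0 then 1 else 0 := by
    split_ifs with hx
    · rw [hx, zero_pow hq, sub_self]
    · rw [FiniteField.pow_card_sub_one_eq_one x hx, sub_zero]
  simp only [h, Finset.sum_sub_distrib, Finset.sum_ite_eq', Finset.mem_univ, if_true,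
    Finset.sum_const, Finset.card_univ, nsmul_eq_mul, mul_one, Nat.cast_card_eq_zero, zero_sub]

open MvPolynomial

lemma exists_mem_restrictDegree_eval_eq {σ : Type*} [Finite σ] (f : (σ → K) → K) :
    ∃ P ∈ restrictDegree σ K (Fintype.card K - 1), ∀ x, eval x P = f x := by
  obtain ⟨P, hP, hPf⟩ : f ∈ (restrictDegree σ K (Fintype.card K - 1)).map (evalₗ K σ) := by
    rw [map_restrict_dom_evalₗ]
    exact Submodule.mem_top
  exact ⟨P, hP, congrFun hPf⟩

variable {σ : Type*} [Fintype σ] [DecidableEq σ]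

lemma sum_prod_pow_mul_prod_pow (m m' : σ → ℕ) :
    ∑ x : σ → K, (∏ i, x i ^ m' i) * ∏ i, x i ^ (Fintype.card K - 1 - m i) =
      ∏ i, ∑ t : K, t ^ (m' i + (Fintype.card K - 1 - m i)) := by
  rw [Fintype.prod_sum]
  exact Finset.sum_congr rfl fun x _ => by simp only [← Finset.prod_mul_distrib, ← pow_add]

lemma sum_eval_mul_prod_pow {P : MvPolynomial σ K}
    (hP : P ∈ restrictDegree σ K (Fintype.card K - 1)) {m : σ →₀ ℕ} (hm : m ∈ P.support)
    (hdeg : m.degree = P.totalDegree) :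
    ∑ x : σ → K, eval x P * ∏ i, x i ^ (Fintype.card K - 1 - m i) =
      P.coeff m * (-1) ^ Fintype.card σ := by
  have hmon (m' : σ →₀ ℕ) (hm' : m' ∈ P.support) (hne : m' ≠ m) :
      ∏ i, ∑ t : K, t ^ (m' i + (Fintype.card K - 1 - m i)) = 0 := by
    obtain ⟨i, hi⟩ : ∃ i, m' i < m i := by
      by_contra! hle
      have hsum : ∑ i, m' i ≤ ∑ i, m i := by
        rw [← Finsupp.degree_eq_sum, ← Finsupp.degree_eq_sum, hdeg]
        exact le_totalDegree hm'
      exact hne (Finsupp.ext fun i => ((Finset.sum_eq_sum_iff_of_le fun i _ => hle i).mp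
        (le_antisymm (Finset.sum_le_sum fun i _ => hle i) hsum) i (Finset.mem_univ i)).symm)
    have := (mem_restrictDegree _ _ _).mp hP m hm i
    exact Finset.prod_eq_zero (Finset.mem_univ i)
      (FiniteField.sum_pow_lt_card_sub_one _ _ (by omega))
  simp only [eval_eq', Finset.sum_mul, mul_assoc]
  rw [Finset.sum_comm]
  simp only [← Finset.mul_sum, sum_prod_pow_mul_prod_pow]
  rw [Finset.sum_eq_single_of_mem m hm fun m' hm' hne => by rw [hmon m' hm' hne, mul_zero]]
  congr 1
  rw [Finset.prod_eq_pow_card (b := -1) fun i _ => ?_, Finset.card_univ]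
  rw [Nat.add_sub_cancel' ((mem_restrictDegree _ _ _).mp hP m hm i), sum_pow_card_sub_one]

lemma totalDegree_add_lt_of_eval_mem_polyDual {P : MvPolynomial σ K} {e : ℕ} (hP0 : P ≠ 0)
    (hP : P ∈ restrictDegree σ K (Fintype.card K - 1))
    (h : (fun x => eval x P) ∈ polyDual K (σ → K) e) :
    P.totalDegree + e < (Fintype.card K - 1) * Fintype.card σ := by
  obtain ⟨m, hm, hdeg⟩ :=
    Finset.exists_mem_eq_sup P.support (support_nonempty.mpr hP0) Finsupp.degree
  by_contra! hle
  have hcompl : ∑ i, (Fintype.card K - 1 - m i) ≤ e := by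
    have hadd : ∑ i, (Fintype.card K - 1 - m i) + ∑ i, m i =
        (Fintype.card K - 1) * Fintype.card σ := by
      rw [← Finset.sum_add_distrib, Finset.sum_congr rfl fun i _ =>
        Nat.sub_add_cancel ((mem_restrictDegree _ _ _).mp hP m hm i), Finset.sum_const,
        Finset.card_univ, smul_eq_mul, mul_comm]
    have hsum : P.totalDegree = ∑ i, m i := hdeg.trans (Finsupp.degree_eq_sum m)
    omega
  have hφ : ∏ i, (fun x : σ → K => x i) ^ (Fintype.card K - 1 - m i) ∈
      polyDegLE K (σ → K) e := by
    have hcoord (i : σ) : (fun x : σ → K => x i) ∈ polyDegLE K (σ → K) 1 :=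
      affineMap_mem_polyDegLE (LinearMap.proj i : (σ → K) →ₗ[K] K).toAffineMap
    refine polyDegLE_mono hcompl (prod_mem_polyDegLE _ fun i _ => ?_)
    simpa only [one_mul] using pow_mem_polyDegLE (hcoord i) (Fintype.card K - 1 - m i)
  have hzero := h _ hφ
  simp only [dotProduct, Finset.prod_apply, Pi.pow_apply] at hzero
  rw [sum_eval_mul_prod_pow hP hm hdeg.symm] at hzero
  exact mul_ne_zero (mem_support_iff.mp hm) (pow_ne_zero _ (neg_ne_zero.mpr one_ne_zero)) hzero

end PolynomialDegree

lemma mem_PolySet_of_mem_polyDual {r d : ℕ} {f : Fn r} (hf : f ∈ polyDual F3 (Pt r) (2 * d)) :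
    f ∈ PolySet r (2 * r - 2 * d - 1) := by
  obtain ⟨P, hP, hPf⟩ := exists_mem_restrictDegree_eval_eq f
  refine ⟨P, ?_, fun i => MvPolynomial.degreeOf_le_iff.mpr fun m hm => ?_, fun x => (hPf x).symm⟩
  · obtain rfl | hP0 := eq_or_ne P 0
    · exact MvPolynomial.totalDegree_zero.le.trans (Nat.zero_le _)
    · have hev : (fun x => MvPolynomial.eval x P) ∈ polyDual F3 (Pt r) (2 * d) := by
        simpa only [hPf] using hf
      have h := totalDegree_add_lt_of_eval_mem_polyDual hP0 hP hev
      rw [ZMod.card, Fintype.card_fin] at h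
      omega
  · have h := (MvPolynomial.mem_restrictDegree _ _ _).mp hP m hm i
    rwa [ZMod.card] at h

section Rho

variable {r d : ℕ}

lemma isPrimitiveRoot_ω : IsPrimitiveRoot ω 3 := by
  simpa only [ω, Nat.cast_ofNat] using Complex.isPrimitiveRoot_exp 3 three_ne_zero

lemma sum_ω_pow_mul_val (t : F3) : ∑ a : F3, ω ^ (a * t).val = if t = 0 then 3 else 0 := by
  have h := AddChar.sum_mulShift t
    (AddChar.zmodChar_primitive_of_primitive_root 3 isPrimitiveRoot_ω)
  simpa only [AddChar.zmodChar_apply, ZMod.card, Nat.cast_ite, Nat.cast_ofNat, Nat.cast_zero]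
    using h

/-- The tuple of affine forms `x ↦ ⟨vᵢ, x⟩ + cᵢ`, as an equivalence between the pairs `(v, c)` and
the tuples of affine forms. -/
noncomputable def affineForms :
    (Fin d → Pt r) × (Fin d → F3) ≃ (Fin d → Pt r →ᵃ[F3] F3) where
  toFun p i := (dotProductEquiv F3 (Fin r) (p.1 i)).toAffineMap + AffineMap.const F3 (Pt r) (p.2 i)
  invFun u := (fun i => (dotProductEquiv F3 (Fin r)).symm (u i).linear, fun i => u i 0)
  left_inv p := by
    refine Prod.ext (funext fun i => ?_) (funext fun i => ?_)
    · simp only [AffineMap.add_linear, LinearMap.toAffineMap_linear, AffineMap.const_linear,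
        add_zero, LinearEquiv.symm_apply_apply]
    · simp only [AffineMap.coe_add, LinearMap.coe_toAffineMap, AffineMap.coe_const, Pi.add_apply,
        map_zero, Function.const_apply, zero_add]
  right_inv u := by
    refine funext fun i => AffineMap.ext fun x => ?_
    simp only [LinearEquiv.apply_symm_apply, AffineMap.coe_add, LinearMap.coe_toAffineMap,
      AffineMap.decomp' (u i), AffineMap.coe_const, Pi.add_apply, Pi.sub_apply,
      Function.const_apply, sub_add_cancel]

lemma affineForms_apply (p : (Fin d → Pt r) × (Fin d → F3)) (i : Fin d) (x : Pt r) :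
    affineForms p i x = (∑ j, p.1 i j * x j) + p.2 i := rfl

lemma affineForms_mem_flatTuples {p : (Fin d → Pt r) × (Fin d → F3)} :
    affineForms p ∈ flatTuples F3 (Pt r) d ↔ p ∈ LIset r d ×ˢ Finset.univ := by
  have hlin : (fun i => (affineForms p i).linear) = dotProductEquiv F3 (Fin r) ∘ p.1 :=
    funext fun i => add_zero _
  rw [mem_flatTuples, hlin, Finset.mem_product, LIset, Finset.mem_filter_univ]
  simp only [Finset.mem_univ, and_true]
  exact LinearMap.linearIndependent_iff_of_injOn (dotProductEquiv F3 (Fin r)).toLinearMap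
    (dotProductEquiv F3 (Fin r)).injective.injOn

lemma ellProd_eq (p : (Fin d → Pt r) × (Fin d → F3)) :
    ellProd p.1 p.2 = (-1 : F3) ^ d • flatInd (affineForms p) := by
  have hfactor : ∀ t : F3, (t - 1) * (t - 2) = -1 * (1 - t ^ 2) := by decide
  ext x
  simp only [ellProd, hfactor, Finset.prod_mul_distrib, Finset.prod_const, Finset.card_univ,
    Fintype.card_fin, flatInd, hyperplaneInd_eq_one_sub_sq, Pi.smul_apply, Finset.prod_apply,
    Pi.sub_apply, Pi.one_apply, Pi.pow_apply, affineForms_apply, smul_eq_mul]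

lemma dotF_ellProd_eq_zero_iff (α : Fn r) (p : (Fin d → Pt r) × (Fin d → F3)) :
    dotF α (ellProd p.1 p.2) = 0 ↔ α ⬝ᵥ flatInd (affineForms p) = 0 := by
  change α ⬝ᵥ ellProd p.1 p.2 = 0 ↔ _
  rw [ellProd_eq, dotProduct_smul, smul_eq_zero_iff_right (pow_ne_zero _ (by decide))]

lemma card_LIset_mul_pow : (LIset r d).card * 3 ^ d = (flatTuples F3 (Pt r) d).card := by
  have h : (Finset.univ : Finset (Fin d → F3)).card = 3 ^ d := by
    rw [Finset.card_univ, Fintype.card_fun, ZMod.card, Fintype.card_fin]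
  rw [← h, ← Finset.card_product]
  exact Finset.card_equiv affineForms fun p => affineForms_mem_flatTuples.symm

lemma card_filter_dotF_ellProd_add_card_rejecting (α : Fn r) :
    ((LIset r d ×ˢ Finset.univ).filter fun p => dotF α (ellProd p.1 p.2) = 0).card +
      (rejecting d α).card = (flatTuples F3 (Pt r) d).card := by
  rw [rejecting, ← Finset.card_filter_add_card_filter_not (s := flatTuples F3 (Pt r) d)
    fun u => α ⬝ᵥ flatInd u = 0]
  congr 1
  refine Finset.card_equiv affineForms fun p => ?_
  rw [Finset.mem_filter, Finset.mem_filter, affineForms_mem_flatTuples, dotF_ellProd_eq_zero_iff]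

lemma card_flatTuples_pos (h : d ≤ r) : 0 < (flatTuples F3 (Pt r) d).card := by
  rw [← card_LIset_mul_pow]
  refine Nat.mul_pos (Finset.card_pos.mpr ⟨fun i => Pi.basisFun F3 (Fin r) (Fin.castLE h i), ?_⟩)
    (pow_pos three_pos d)
  exact (Finset.mem_filter_univ _).mpr
    ((Pi.basisFun F3 (Fin r)).linearIndependent.comp _ (Fin.castLE_injective h))

lemma rho_eq_one_sub_card_rejecting_div (h : d ≤ r) (α : Fn r) :
    rho r d α = 1 - (rejecting d α).card / ((flatTuples F3 (Pt r) d).card : ℝ) := by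
  have hT : ((flatTuples F3 (Pt r) d).card : ℝ) ≠ 0 := by exact_mod_cast (card_flatTuples_pos h).ne'
  have hsum : ∑ v ∈ LIset r d, ∑ c : Fin d → F3, ∑ a : F3, ω ^ (a * dotF α (ellProd v c)).val =
      (((flatTuples F3 (Pt r) d).card - (rejecting d α).card : ℝ) * 3 : ℝ) := by
    simp only [sum_ω_pow_mul_val]
    rw [← Finset.sum_product', ← Finset.sum_filter, Finset.sum_const, nsmul_eq_mul,
      ← card_filter_dotF_ellProd_add_card_rejecting α]
    push_cast
    ring
  have hcard : ((LIset r d).card : ℂ) * 3 ^ d * 3 = ((flatTuples F3 (Pt r) d).card * 3 : ℝ) := by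
    rw [← card_LIset_mul_pow]
    push_cast
    ring
  rw [rho, hsum, hcard, ← Complex.ofReal_div, Complex.ofReal_re,
    mul_div_mul_right _ _ three_ne_zero, sub_div, div_self hT]

end Rho

section Bounds

variable {r d : ℕ}

lemma one_sub_supp_div_le_rho (hdr : d ≤ r) (α : Fn r) : 1 - (supp α : ℝ) / 3 ^ d ≤ rho r d α := by
  have hT : (0 : ℝ) < (flatTuples F3 (Pt r) d).card := by exact_mod_cast card_flatTuples_pos hdr
  have h : ((rejecting d α).card : ℝ) * 3 ^ d ≤ supp α * (flatTuples F3 (Pt r) d).card := by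
    have hcard := card_rejecting_mul_card_pow_le d α
    rw [ZMod.card] at hcard
    exact_mod_cast hcard
  rw [rho_eq_one_sub_card_rejecting_div hdr]
  exact sub_le_sub_left ((div_le_div_iff₀ hT (by positivity)).mpr h) 1

lemma distToSet_le_hammingDist {α g : Fn r} {S : Set (Fn r)} (hg : g ∈ S) :
    distToSet α S ≤ hammingDist α g := by
  refine Nat.sInf_le ⟨g, hg, ?_⟩
  simp only [hammingD, hammingDist]

lemma rho_le_one_sub_hammingDist_add_sq (hdr : d ≤ r) (α : Fn r) {g : Fn r}
    (hg : g ∈ polyDual F3 (Pt r) (2 * d)) :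
    rho r d α ≤ 1 - ((hammingDist α g : ℝ) / 3 ^ d - (hammingDist α g / 3 ^ d) ^ 2) := by
  have hT : (0 : ℝ) < (flatTuples F3 (Pt r) d).card := by exact_mod_cast card_flatTuples_pos hdr
  have h := card_flatTuples_mul_le_card_rejecting (f := α) (d := d) (g := g)
    (by rw [ZMod.card]; exact hg)
  rw [ZMod.card, Nat.cast_ofNat, mul_comm, ← le_div_iff₀ hT] at h
  rw [rho_eq_one_sub_card_rejecting_div hdr]
  exact sub_le_sub_left h 1

lemma rho_le_one_sub_distToSet (hdr : d ≤ r) {α g : Fn r} (hg : g ∈ polyDual F3 (Pt r) (2 * d))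
    (hαg : 2 * hammingDist α g ≤ 3 ^ d) :
    rho r d α ≤ 1 - 1 / 2 * (distToSet α (PolySet r (2 * r - 2 * d - 1)) : ℝ) / 3 ^ d := by
  have hdist : (distToSet α (PolySet r (2 * r - 2 * d - 1)) : ℝ) / 3 ^ d ≤
      hammingDist α g / 3 ^ d := by
    gcongr
    exact distToSet_le_hammingDist (mem_PolySet_of_mem_polyDual hg)
  have hs : (hammingDist α g : ℝ) / 3 ^ d ≤ 1 / 2 := by
    have hαg' : (2 : ℝ) * hammingDist α g ≤ 3 ^ d := by exact_mod_cast hαg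
    rw [div_le_iff₀ (by positivity)]
    linarith
  have hs0 : (0 : ℝ) ≤ hammingDist α g / 3 ^ d := by positivity
  rw [mul_div_assoc]
  nlinarith [rho_le_one_sub_hammingDist_add_sq hdr α hg, mul_nonneg hs0 (sub_nonneg.mpr hs)]

lemma rho_le_one_sub_detectionRate (hdr : d ≤ r) {α : Fn r}
    (hα : ∀ g ∈ polyDual F3 (Pt r) (2 * d), 3 ^ d ≤ 12 * hammingDist α g) :
    rho r d α ≤ 1 - detectionRate := by
  have hT : (0 : ℝ) < (flatTuples F3 (Pt r) d).card := by exact_mod_cast card_flatTuples_pos hdr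
  rw [rho_eq_one_sub_card_rejecting_div hdr]
  refine sub_le_sub_left ((le_div_iff₀ hT).mpr (le_trans ?_
    (detectionRate_mul_card_flatTuples_le hα))) 1
  refine mul_le_mul_of_nonneg_right ?_ hT.le
  exact le_mul_of_one_le_right detectionRate_pos.le (le_add_of_nonneg_right (by positivity))

end Bounds

end FlatTest

/-- Eigenvalue bounds for the operator `S_{r,d}` (Lemma 4.5): there exist universal
`C₁ > 0` and `C₂ ∈ (0,1)` such that for `1 ≤ d ≤ r` and all `α`,
`1 − 2|α|/3^d ≤ ρ_{r,d}(α) ≤ max{1 − C₁·Δ(α, P_{r,2r−2d−1})/3^d, C₂}`. -/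
theorem stmt17 :
    ∃ C₁ C₂ : ℝ, 0 < C₁ ∧ 0 < C₂ ∧ C₂ < 1 ∧
      ∀ r d : ℕ, 1 ≤ d → d ≤ r → ∀ α : Fn r,
        1 - 2 * (supp α : ℝ) / 3 ^ d ≤ rho r d α ∧
        rho r d α ≤
          max (1 - C₁ * (distToSet α (PolySet r (2 * r - 2 * d - 1)) : ℝ) / 3 ^ d) C₂ := by
  refine ⟨1 / 2, 1 - FlatTest.detectionRate, one_half_pos,
    by linarith [FlatTest.detectionRate_le], sub_lt_self 1 FlatTest.detectionRate_pos,
    fun r d _ hdr α => ⟨?_, ?_⟩⟩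
  · refine le_trans ?_ (FlatTest.one_sub_supp_div_le_rho hdr α)
    gcongr
    linarith [Nat.cast_nonneg (α := ℝ) (supp α)]
  · by_cases hclose : ∃ g ∈ FlatTest.polyDual F3 (Pt r) (2 * d), 2 * hammingDist α g ≤ 3 ^ d
    · obtain ⟨g, hg, hαg⟩ := hclose
      exact le_max_of_le_left (FlatTest.rho_le_one_sub_distToSet hdr hg hαg)
    · push Not at hclose
      exact le_max_of_le_right (FlatTest.rho_le_one_sub_detectionRate hdr fun g hg => by
        have := hclose g hg
        omega)
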